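/- Let A ⊆ B be a symmetric C*-inclusion with a residually symmetric conditional expectation E : B → A, and assume that A separates ideals in B. Then B is purely infinite if and only if every nonzero a ∈ A⁺ is properly infinite in B and E(b) ≼ b for every b ∈ B⁺. Moreover, if A separates ideals in B and B is purely infinite, then A⁺ fills B. -/

import Mathlib

/- Common definitions for C*-inclusions, ideals, Cuntz subequivalence,
   supporting/filling families and pure infiniteness. -/

namespace KM

variable {B : Type*} [NonUnitalCStarAlgebra B] [PartialOrder B]

/-- `J` is a closed two-sided ideal of the C*-algebra `C` (given as a subset of `B`). -/
def IsIdealIn (C J : Set B) : Prop :=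
  J ⊆ C ∧ IsClosed J ∧ (0 : B) ∈ J ∧ (∀ x ∈ J, ∀ y ∈ J, x + y ∈ J) ∧
    (∀ (c : ℂ), ∀ x ∈ J, c • x ∈ J) ∧ (∀ x ∈ J, ∀ c ∈ C, c * x ∈ J ∧ x * c ∈ J)

/-- `J` is a closed two-sided ideal of `B`. -/
def IsIdeal (J : Set B) : Prop := IsIdealIn Set.univ J

/-- `A` is a C*-subalgebra of `B`: a closed `*`-subalgebra. -/
def IsSubCStar (A : Set B) : Prop :=
  IsClosed A ∧ (0 : B) ∈ A ∧ (∀ x ∈ A, ∀ y ∈ A, x + y ∈ A) ∧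
    (∀ (c : ℂ), ∀ x ∈ A, c • x ∈ A) ∧ (∀ x ∈ A, ∀ y ∈ A, x * y ∈ A) ∧
    (∀ x ∈ A, star x ∈ A)

/-- The smallest closed two-sided ideal of the C*-algebra `C` containing `S`. -/
def idealGenIn (C S : Set B) : Set B := ⋂₀ {J : Set B | IsIdealIn C J ∧ S ⊆ J}

/-- The smallest closed two-sided ideal of `B` containing `S`; for an ideal `I` of a
subalgebra `A` this is the induced ideal `BIB`. -/
def idealGen (S : Set B) : Set B := idealGenIn Set.univ S

/-- `I` is a restricted ideal of the subalgebra `A`, i.e. `I = J ∩ A` for an ideal `J` of `B`. -/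
def IsRestricted (A I : Set B) : Prop := ∃ J : Set B, IsIdeal J ∧ I = J ∩ A

/-- `J` is an induced ideal of `B`: `J = BIB` for some ideal `I` of `A`. -/
def IsInduced (A J : Set B) : Prop := ∃ I : Set B, IsIdealIn A I ∧ J = idealGen I

/-- `A` separates ideals in `B`. -/
def SeparatesIdeals (A : Set B) : Prop :=
  ∀ J₁ J₂ : Set B, IsIdeal J₁ → IsIdeal J₂ → J₁ ∩ A = J₂ ∩ A → J₁ = J₂

/-- Cuntz subequivalence `a ≼ b`. -/
def CuntzBelow (a b : B) : Prop :=
  ∀ ε : ℝ, 0 < ε → ∃ x : B, ‖a - star x * b * x‖ < ε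

/-- `F` supports `B`. -/
def Supports (F : Set B) : Prop :=
  ∀ b : B, 0 ≤ b → b ≠ 0 → ∃ a ∈ F, a ≠ 0 ∧ CuntzBelow a b

/-- `F` residually supports the C*-algebra `C ⊆ B`: for every ideal `J` of `C`, the image
of `F` in `C/J` supports `C/J`, phrased concretely via the distance to `J`. -/
def ResiduallySupportsIn (C F : Set B) : Prop :=
  ∀ J : Set B, IsIdealIn C J → ∀ b ∈ C, 0 ≤ b → b ∉ J →
    ∃ a ∈ F, a ∉ J ∧ ∀ ε : ℝ, 0 < ε → ∃ x ∈ C,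
      Metric.infDist (a - star x * b * x) J < ε

/-- `F` residually supports `B`. -/
def ResiduallySupports (F : Set B) : Prop := ResiduallySupportsIn Set.univ F

/-- `x` lies in `aB = {a c : c ∈ B}`. -/
def MemRightMul (a x : B) : Prop := ∃ c : B, x = a * c

/-- `a` is properly infinite in `B`. -/
def ProperlyInfinite (a : B) : Prop :=
  ∀ ε : ℝ, 0 < ε → ∃ x y : B, MemRightMul a x ∧ MemRightMul a y ∧
    ‖star x * x - a‖ ≤ ε ∧ ‖star y * y - a‖ ≤ ε ∧ ‖star x * y‖ ≤ ε

/-- `a` is infinite in `B`. -/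
def InfiniteElt (a : B) : Prop :=
  ∃ b : B, 0 ≤ b ∧ b ≠ 0 ∧ ∀ ε : ℝ, 0 < ε → ∃ x y : B,
    MemRightMul a x ∧ MemRightMul a y ∧
    ‖star x * x - a‖ ≤ ε ∧ ‖star y * y - b‖ ≤ ε ∧ ‖star x * y‖ ≤ ε

/-- The pair `a, b` is separated in `B`. -/
def SeparatedPair (a b : B) : Prop :=
  ∀ ε : ℝ, 0 < ε → ∃ x y : B, MemRightMul a x ∧ MemRightMul b y ∧
    ‖star x * x - a‖ ≤ ε ∧ ‖star y * y - b‖ ≤ ε ∧ ‖star x * y‖ ≤ ε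

/-- A character of `B`: a nonzero multiplicative linear functional `B → ℂ`. -/
def IsCharacter (φ : B →ₗ[ℂ] ℂ) : Prop :=
  (∀ x y : B, φ (x * y) = φ x * φ y) ∧ φ ≠ 0

/-- `B` is purely infinite: it admits no characters and for nonzero positive `a, b`,
`a ≼ b` iff `a` lies in the ideal generated by `b`. -/
def PurelyInfinite (B : Type*) [NonUnitalCStarAlgebra B] [PartialOrder B] : Prop :=
  (¬ ∃ φ : B →ₗ[ℂ] ℂ, IsCharacter φ) ∧
    ∀ a b : B, 0 ≤ a → a ≠ 0 → 0 ≤ b → b ≠ 0 → (CuntzBelow a b ↔ a ∈ idealGen {b})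

/-- `p` is a projection. -/
def IsProjection (p : B) : Prop := star p = p ∧ p * p = p

/-- `B` has the ideal property: projections separate ideals. -/
def IdealProperty (B : Type*) [NonUnitalCStarAlgebra B] [PartialOrder B] : Prop :=
  ∀ J₁ J₂ : Set B, IsIdeal J₁ → IsIdeal J₂ →
    (∀ p : B, IsProjection p → (p ∈ J₁ ↔ p ∈ J₂)) → J₁ = J₂

/-- `B` is strongly purely infinite: every pair of positive elements is separated. -/
def StronglyPurelyInfinite (B : Type*) [NonUnitalCStarAlgebra B] [PartialOrder B] : Prop :=
  ∀ a b : B, 0 ≤ a → 0 ≤ b → SeparatedPair a b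

/-- `D` is a hereditary C*-subalgebra of `B`. -/
def IsHereditary (D : Set B) : Prop :=
  IsSubCStar D ∧ ∀ b d : B, d ∈ D → 0 ≤ b → b ≤ d → b ∈ D

/-- `F` fills `B`. -/
def Fills (F : Set B) : Prop :=
  ∀ D : Set B, IsHereditary D → (∃ d ∈ D, d ≠ 0) →
    ∀ J : Set B, IsIdeal J → ¬ D ⊆ J →
      ∃ z : B, z ∉ J ∧ z * star z ∈ D ∧ star z * z ∈ F

/-- Closed linear span of a subset of `B`. -/
def closSpan (S : Set B) : Set B := closure ↑(Submodule.span ℂ S)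

/-- The C*-inclusion `A ⊆ B` is symmetric. -/
def SymmetricInclusion (A : Set B) : Prop :=
  ∀ I : Set B, IsRestricted A I →
    closSpan {z : B | ∃ x ∈ I, ∃ b : B, z = x * b} =
      closSpan {z : B | ∃ b : B, ∃ x ∈ I, z = b * x}

/-- `b` is a normaliser of `A` in `B`. -/
def IsNormalizer (A : Set B) (b : B) : Prop :=
  (∀ a ∈ A, b * a * star b ∈ A) ∧ (∀ a ∈ A, star b * a * b ∈ A)

/-- The inclusion `A ⊆ B` is nondegenerate: the closed span of `A·B` is `B`. -/
def Nondegenerate (A : Set B) : Prop :=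
  closSpan {z : B | ∃ a ∈ A, ∃ b : B, z = a * b} = Set.univ

/-- The inclusion `A ⊆ B` is regular: nondegenerate and `B` is the closed linear span of
the normalisers of `A`. -/
def RegularInclusion (A : Set B) : Prop :=
  Nondegenerate A ∧ closSpan {b : B | IsNormalizer A b} = Set.univ

end KM

open KM

variable {B : Type*} [NonUnitalCStarAlgebra B] [PartialOrder B] [StarOrderedRing B]

section helpers
set_option linter.unusedSectionVars false
set_option linter.unusedVariables false
open Filter Topology

section charQuot
variable {U : Type*} [NormedRing U] [NormedAlgebra ℂ U] [CompleteSpace U]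

theorem exists_char_of_quot (I : Ideal U) [I.IsTwoSided] (hI : IsClosed (I : Set U))
    (hc : ∀ x y : U, x * y - y * x ∈ I) (p q : U) (hp : p ∉ I) (hpq : p * q ∈ I) :
    ∃ χ : U →ₐ[ℂ] ℂ, χ q = 0 := by
  haveI : IsClosed (I : Set U) := hI
  haveI : IsClosed ((Submodule.toAddSubgroup I : AddSubgroup U) : Set U) := hI
  letI i1 : NormedAddCommGroup (U ⧸ I) := Submodule.Quotient.normedAddCommGroup I
  letI i2 : NormedCommRing (U ⧸ I) :=
    { Ideal.Quotient.ring I, i1 with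
      mul_comm := by
        rintro ⟨x⟩ ⟨y⟩
        exact Ideal.Quotient.eq.2 (hc x y)
      norm_mul_le := fun x y => le_of_forall_pos_le_add fun ε hε => by
        have := ((Metric.nhds_basis_ball.prod_nhds Metric.nhds_basis_ball).tendsto_iff
          Metric.nhds_basis_ball).mp (continuous_mul.tendsto (‖x‖, ‖y‖)) ε hε
        simp only [Set.mem_prod, Metric.mem_ball, and_imp, Prod.forall, Prod.exists] at this
        rcases this with ⟨ε₁, ε₂, ⟨h₁, h₂⟩, h⟩
        obtain ⟨⟨a, rfl, ha⟩, ⟨b, rfl, hb⟩⟩ := Submodule.Quotient.norm_mk_lt x h₁,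
          Submodule.Quotient.norm_mk_lt y h₂
        simp only [dist, abs_sub_lt_iff] at h
        specialize h ‖a‖ ‖b‖ ⟨by linarith, by linarith [Submodule.Quotient.norm_mk_le I a]⟩
          ⟨by linarith, by linarith [Submodule.Quotient.norm_mk_le I b]⟩
        calc
          _ ≤ ‖a‖ * ‖b‖ := (Submodule.Quotient.norm_mk_le I (a * b)).trans (norm_mul_le a b)
          _ ≤ _ := (sub_lt_iff_lt_add'.mp h.1).le }
  letI i3 : NormedAlgebra ℂ (U ⧸ I) :=
    { Submodule.Quotient.normedSpace I ℂ, Ideal.Quotient.algebra ℂ with }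
  haveI : CompleteSpace (U ⧸ I) := QuotientAddGroup.completeSpace_left _ _
  let π : U →ₐ[ℂ] U ⧸ I := Ideal.Quotient.mkₐ ℂ I
  have hq : ¬ IsUnit (π q) := by
    intro hu
    have : π p * π q = 0 := by
      rw [← map_mul]; exact Ideal.Quotient.eq_zero_iff_mem.2 hpq
    have h0 : π p = 0 := hu.mul_left_eq_zero.1 this
    exact hp (Ideal.Quotient.eq_zero_iff_mem.1 h0)
  obtain ⟨f, hf⟩ := WeakDual.CharacterSpace.exists_apply_eq_zero hq
  exact ⟨(WeakDual.CharacterSpace.equivAlgHom f).comp π, hf⟩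
end charQuot


/-- The approximate unit `t²/(t²+r²)` evaluated at `q`. -/
noncomputable def kU (r : ℝ) (q : B) : B := cfcₙ (fun t : ℝ => t ^ 2 / (t ^ 2 + r ^ 2)) q
noncomputable def kG (r : ℝ) (q : B) : B := cfcₙ (fun t : ℝ => t / (t ^ 2 + r ^ 2)) q

theorem contU {r : ℝ} (hr : 0 < r) : Continuous (fun t : ℝ => t ^ 2 / (t ^ 2 + r ^ 2)) := by
  apply Continuous.div (by fun_prop) (by fun_prop)
  intro x; positivity

theorem contG {r : ℝ} (hr : 0 < r) : Continuous (fun t : ℝ => t / (t ^ 2 + r ^ 2)) := by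
  apply Continuous.div (by fun_prop) (by fun_prop)
  intro x; positivity

theorem kU_sa (r : ℝ) (q : B) : star (kU r q) = kU r q := (cfcₙ_predicate (R := ℝ) _ q).star_eq
theorem kG_sa (r : ℝ) (q : B) : star (kG r q) = kG r q := (cfcₙ_predicate (R := ℝ) _ q).star_eq

theorem kU_eq {r : ℝ} (hr : 0 < r) (q : B) (hq : IsSelfAdjoint q) : kU r q = q * kG r q := by
  unfold kU kG
  conv_rhs => enter [1]; rw [← cfcₙ_id' ℝ q]
  rw [← cfcₙ_mul (hf := by fun_prop) (hg := (contG hr).continuousOn)]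
  congr 1; ext t; ring

theorem kU_eq' {r : ℝ} (hr : 0 < r) (q : B) (hq : IsSelfAdjoint q) : kU r q = kG r q * q := by
  rw [← kU_sa, kU_eq hr q hq, star_mul, kG_sa, hq.star_eq]

theorem conj_pos (u p : B) (hu : star u = u) (hp : 0 ≤ p) : 0 ≤ p - u * p - p * u + u * p * u := by
  have h1 := CFC.sqrt_mul_sqrt_self p hp
  have h2 : star (CFC.sqrt p) = CFC.sqrt p := (CFC.sqrt_nonneg p).isSelfAdjoint.star_eq
  have : p - u * p - p * u + u * p * u = (CFC.sqrt p - u * CFC.sqrt p) * star (CFC.sqrt p - u * CFC.sqrt p) := by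
    rw [star_sub, star_mul, hu, h2]
    conv_lhs => rw [← h1]
    noncomm_ring
  rw [this]; exact mul_star_self_nonneg _

theorem norm_sq_le_of_star {x : B} {q : B} (h : x * star x ≤ q) : ‖x‖ ^ 2 ≤ ‖q‖ := by
  have := CStarAlgebra.norm_le_norm_of_nonneg_of_le (mul_star_self_nonneg x) h
  rw [CStarRing.norm_self_mul_star] at this
  nlinarith

theorem K1 {q s : B} (hq : 0 ≤ q) (h : s * star s ≤ q) {r : ℝ} (hr : 0 < r) :
    ‖s - kU r q * s‖ ^ 2 ≤ r := by
  have hsa := kU_sa r q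
  have key : (s - kU r q * s) * star (s - kU r q * s) ≤ q - kU r q * q - q * kU r q + kU r q * q * kU r q := by
    have h0 := conj_pos (kU r q) (q - s * star s) hsa (sub_nonneg.2 h)
    rw [← sub_nonneg]
    convert h0 using 1
    rw [star_sub, star_mul, hsa]
    noncomm_ring
  refine (norm_sq_le_of_star key).trans ?_
  have : q - kU r q * q - q * kU r q + kU r q * q * kU r q
      = cfcₙ (fun t : ℝ => t * (1 - t ^ 2 / (t ^ 2 + r ^ 2)) ^ 2) q := by
    have gen : ∀ f : ℝ → ℝ, Continuous f → f 0 = 0 → cfcₙ (fun t : ℝ => t * (1 - f t) ^ 2) q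
        = q - cfcₙ f q * q - q * cfcₙ f q + cfcₙ f q * q * cfcₙ f q := by
      intro f hf hf0
      have e : (fun t : ℝ => t * (1 - f t) ^ 2) = fun t : ℝ =>
         t - f t * t - t * f t + f t * t * f t := by
        ext t; ring
      rw [e, cfcₙ_add (hf := by fun_prop) (hg := by fun_prop),
        cfcₙ_sub (hf := by fun_prop) (hg := by fun_prop),
        cfcₙ_sub (hf := by fun_prop) (hg := by fun_prop), 
        cfcₙ_mul (hf := by fun_prop) (hg := by fun_prop),
        cfcₙ_mul (hf := by fun_prop) (hg := by fun_prop),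
        cfcₙ_mul (hf := by fun_prop) (hg := by fun_prop),
        cfcₙ_mul (hf := by fun_prop) (hg := by fun_prop), cfcₙ_id' ℝ q]
    exact (gen _ (contU hr) (by simp)).symm
  rw [this]
  refine norm_cfcₙ_le  ?_
  intro t ht
  have ht0 : 0 ≤ t := quasispectrum_nonneg_of_nonneg q hq t ht
  rw [Real.norm_of_nonneg (by positivity)]
  have : t * (1 - t ^ 2 / (t ^ 2 + r ^ 2)) ^ 2 = t * r ^ 4 / (t ^ 2 + r ^ 2) ^ 2 := by
    field_simp; ring
  rw [this, div_le_iff₀ (by positivity)]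
  have h1 : t * r ≤ t ^ 2 + r ^ 2 := by nlinarith [sq_nonneg (t - r)]
  have h2 : r ^ 2 ≤ t ^ 2 + r ^ 2 := by nlinarith
  calc t * r ^ 4 = r * ((t * r) * r ^ 2) := by ring
    _ ≤ r * ((t ^ 2 + r ^ 2) * (t ^ 2 + r ^ 2)) := by gcongr
    _ = _ := by ring


theorem K1_tendsto {q s : B} (hq : 0 ≤ q) (h : s * star s ≤ q) :
    Tendsto (fun n : ℕ => kU (1 / ((n : ℝ) + 1)) q * s) atTop (𝓝 s) := by
  rw [tendsto_iff_norm_sub_tendsto_zero]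
  have h1 : ∀ n : ℕ, ‖kU (1 / ((n : ℝ) + 1)) q * s - s‖ ≤ √(1 / ((n : ℝ) + 1)) := by
    intro n
    rw [norm_sub_rev]
    exact Real.le_sqrt_of_sq_le (K1 hq h (by positivity))
  refine squeeze_zero (fun _ => norm_nonneg _) h1 ?_
  have := (Real.continuous_sqrt.tendsto 0).comp (tendsto_one_div_add_atTop_nhds_zero_nat (𝕜 := ℝ))
  simpa [Function.comp_def] using this

theorem sqrt_sa (a : B) : star (CFC.sqrt a) = CFC.sqrt a := (CFC.sqrt_nonneg a).isSelfAdjoint.star_eq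

theorem sqrt_comm_kG (r : ℝ) (q : B) (hq : 0 ≤ q) : CFC.sqrt q * kG r q = kG r q * CFC.sqrt q := by
  rw [CFC.sqrt_eq_real_sqrt q hq]
  exact cfcₙ_commute_cfcₙ _ _ _

/-- heredity -/
theorem her_approx {p q : B} (hp : 0 ≤ p) (h : p ≤ q) {ε : ℝ} (hε : 0 < ε) :
    ∃ y : B, ‖star y * q * y - p‖ < ε := by
  have hq := hp.trans h
  have hpp := CFC.sqrt_mul_sqrt_self p hp
  have hqq := CFC.sqrt_mul_sqrt_self q hq
  have h1 := K1_tendsto (s := CFC.sqrt p) hq (by rw [sqrt_sa, hpp]; exact h)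
  have h2 := h1.star.mul h1
  rw [sqrt_sa, hpp] at h2
  obtain ⟨n, hn⟩ := (((tendsto_iff_norm_sub_tendsto_zero.1 h2).eventually (gt_mem_nhds hε))).exists
  refine ⟨CFC.sqrt q * kG (1 / ((n : ℝ) + 1)) q * CFC.sqrt p, ?_⟩
  have hr : (0:ℝ) < 1 / ((n : ℝ) + 1) := by positivity
  have hqs := hq.isSelfAdjoint
  have hc := sqrt_comm_kG (1 / ((n : ℝ) + 1)) q hq
  rw [star_mul (kU _ _), kU_sa, sqrt_sa] at hn
  nth_rewrite 1 [kU_eq' hr q hqs] at hn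
  rw [kU_eq hr q hqs] at hn
  simp only [star_mul, sqrt_sa, kG_sa]
  have e : CFC.sqrt p * (kG (1 / ((n : ℝ) + 1)) q * CFC.sqrt q) * q *
      (CFC.sqrt q * kG (1 / ((n : ℝ) + 1)) q * CFC.sqrt p) =
    CFC.sqrt p * (kG (1 / ((n : ℝ) + 1)) q * q) * (q * kG (1 / ((n : ℝ) + 1)) q * CFC.sqrt p) := by
    generalize kG (1 / ((n : ℝ) + 1)) q = g at *
    generalize CFC.sqrt p = s at *
    generalize CFC.sqrt q = t at *
    subst hqq
    noncomm_ring
  rw [e]; exact hn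


section ideals
variable {J : Set B}

theorem id_closed (h : IsIdeal J) : IsClosed J := h.2.1
theorem id_zero (h : IsIdeal J) : (0 : B) ∈ J := h.2.2.1
theorem id_add (h : IsIdeal J) {x y : B} (hx : x ∈ J) (hy : y ∈ J) : x + y ∈ J := h.2.2.2.1 x hx y hy
theorem id_smul (h : IsIdeal J) (c : ℂ) {x : B} (hx : x ∈ J) : c • x ∈ J := h.2.2.2.2.1 c x hx
theorem id_rsmul (h : IsIdeal J) (c : ℝ) {x : B} (hx : x ∈ J) : c • x ∈ J := by
  have := id_smul h (c : ℂ) hx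
  simpa using this
theorem id_mul_left (h : IsIdeal J) (c : B) {x : B} (hx : x ∈ J) : c * x ∈ J :=
  (h.2.2.2.2.2 x hx c trivial).1
theorem id_mul_right (h : IsIdeal J) (c : B) {x : B} (hx : x ∈ J) : x * c ∈ J :=
  (h.2.2.2.2.2 x hx c trivial).2
theorem id_neg (h : IsIdeal J) {x : B} (hx : x ∈ J) : -x ∈ J := by
  have := id_smul h (-1) hx
  simpa using this
theorem id_sub (h : IsIdeal J) {x y : B} (hx : x ∈ J) (hy : y ∈ J) : x - y ∈ J := by
  rw [sub_eq_add_neg]; exact id_add h hx (id_neg h hy)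
theorem id_lim (h : IsIdeal J) {f : ℕ → B} {x : B} (hf : ∀ n, f n ∈ J)
    (ht : Tendsto f atTop (𝓝 x)) : x ∈ J :=
  (id_closed h).mem_of_tendsto ht (Eventually.of_forall hf)
theorem id_sum (h : IsIdeal J) {ι : Type*} (s : Finset ι) (f : ι → B) (hf : ∀ i ∈ s, f i ∈ J) :
    ∑ i ∈ s, f i ∈ J := by
  classical
  induction s using Finset.induction_on with
  | empty => simpa using id_zero h
  | insert a s has ih =>
    rw [Finset.sum_insert has]
    exact id_add h (hf _ (Finset.mem_insert_self _ _))
      (ih fun i hi => hf _ (Finset.mem_insert_of_mem hi))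

theorem id_her (h : IsIdeal J) {p q : B} (hp : 0 ≤ p) (hpq : p ≤ q) (hq : q ∈ J) : CFC.sqrt p ∈ J := by
  have hq0 := hp.trans hpq
  refine id_lim h (fun n => ?_)
    (K1_tendsto (s := CFC.sqrt p) hq0 (by rw [sqrt_sa, CFC.sqrt_mul_sqrt_self p hp]; exact hpq))
  rw [kU_eq (by positivity) q hq0.isSelfAdjoint]
  exact id_mul_right h _ (id_mul_right h _ hq)

theorem id_sqrt (h : IsIdeal J) {p : B} (hp : 0 ≤ p) (hq : p ∈ J) : CFC.sqrt p ∈ J :=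
  id_her h hp le_rfl hq

theorem id_her' (h : IsIdeal J) {p q : B} (hp : 0 ≤ p) (hpq : p ≤ q) (hq : q ∈ J) : p ∈ J := by
  rw [← CFC.sqrt_mul_sqrt_self p hp]
  exact id_mul_left h _ (id_her h hp hpq hq)

theorem id_of_star_mul (h : IsIdeal J) {x : B} (hx : star x * x ∈ J) : x ∈ J := by
  have h0 := star_mul_self_nonneg x
  have := (K1_tendsto (s := star x) h0 (by rw [star_star])).star
  rw [star_star] at this
  refine id_lim h (fun n => ?_) this
  rw [star_mul, star_star, kU_sa, kU_eq (by positivity) _ h0.isSelfAdjoint]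
  exact id_mul_left h _ (id_mul_right h _ hx)

theorem id_star (h : IsIdeal J) {x : B} (hx : x ∈ J) : star x ∈ J := by
  apply id_of_star_mul h
  exact id_mul_right h _ (by simpa using hx)

theorem id_cube (h : IsIdeal J) {t : B} (ht : star t = t) (hx : t * t * t ∈ J) : t ∈ J := by
  apply id_of_star_mul h
  rw [ht]
  apply id_of_star_mul h
  rw [star_mul, ht]
  have := id_mul_right h t hx
  rwa [← mul_assoc]

theorem isIdeal_idealGen (S : Set B) : IsIdeal (idealGen S) := by
  refine ⟨fun _ _ => trivial, isClosed_sInter fun K hK => hK.1.2.1, ?_, ?_, ?_, ?_⟩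
  · intro K hK; exact id_zero hK.1
  · intro x hx y hy K hK; exact id_add hK.1 (hx K hK) (hy K hK)
  · intro c x hx K hK; exact id_smul hK.1 c (hx K hK)
  · intro x hx c _
    exact ⟨fun K hK => id_mul_left hK.1 c (hx K hK), fun K hK => id_mul_right hK.1 c (hx K hK)⟩

theorem subset_idealGen (S : Set B) : S ⊆ idealGen S := fun _ hx _ hK => hK.2 hx
theorem idealGen_min (h : IsIdeal J) {S : Set B} (hS : S ⊆ J) : idealGen S ⊆ J :=
  fun _ hx => hx J ⟨h, hS⟩
theorem self_mem_idealGen (a : B) : a ∈ idealGen {a} := subset_idealGen _ rfl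

end ideals

/-- The two-variable infiniteness relation. -/
def kS (a b : B) : Prop := ∀ ε : ℝ, 0 < ε → ∃ r s : B,
  ‖star r * a * r - a‖ < ε ∧ ‖star s * a * s - b‖ < ε ∧ ‖star r * a * s‖ < ε

theorem kS_of_seq {a b : B} (h : ∀ ε : ℝ, 0 < ε → ∃ b', ‖b' - b‖ < ε ∧ kS a b') : kS a b := by
  intro ε hε
  obtain ⟨b', hb, h'⟩ := h (ε / 2) (by positivity)
  obtain ⟨r, s, h1, h2, h3⟩ := h' (ε / 2) (by positivity)
  refine ⟨r, s, by linarith, ?_, by linarith⟩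
  calc ‖star s * a * s - b‖ = ‖(star s * a * s - b') + (b' - b)‖ := by congr 1; abel
    _ ≤ _ := norm_add_le _ _
    _ < ε := by linarith

theorem kS_zero {a : B} (ha : 0 ≤ a) : kS a 0 := by
  intro ε hε
  obtain ⟨y, hy⟩ := her_approx ha le_rfl hε
  exact ⟨y, 0, hy, by simpa using hε, by simpa using hε⟩

theorem kS_conj {a b : B} (z : B) (h : kS a b) : kS a (star z * b * z) := by
  intro ε hε
  set M := ‖z‖ ^ 2 + ‖z‖ + 1 with hM
  have hM0 : 0 < M := by positivity
  obtain ⟨r, s, h1, h2, h3⟩ := h (ε / M) (by positivity)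
  have hz := norm_nonneg z
  have hM1 : ε / M * M = ε := by field_simp
  have hq : 0 < ε / M := by positivity
  refine ⟨r, s * z, ?_, ?_, ?_⟩
  · refine h1.trans_le ?_
    rw [div_le_iff₀ hM0]; nlinarith [sq_nonneg ‖z‖]
  · have e : star (s * z) * a * (s * z) - star z * b * z = star z * (star s * a * s - b) * z := by
      rw [star_mul]; noncomm_ring
    rw [e]
    calc ‖star z * (star s * a * s - b) * z‖ ≤ ‖star z‖ * ‖star s * a * s - b‖ * ‖z‖ := norm_mul₃_le
      _ ≤ ‖z‖ * (ε / M) * ‖z‖ := by rw [norm_star]; gcongr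
      _ = ε / M * ‖z‖ ^ 2 := by ring
      _ < ε / M * M := by gcongr; nlinarith
      _ = ε := hM1
  · rw [← mul_assoc]
    calc ‖star r * a * s * z‖ ≤ ‖star r * a * s‖ * ‖z‖ := norm_mul_le _ _
      _ ≤ ε / M * ‖z‖ := by gcongr
      _ < ε / M * M := by gcongr; nlinarith
      _ = ε := hM1

theorem kS_her {a p q : B} (hp : 0 ≤ p) (hpq : p ≤ q) (h : kS a q) : kS a p := by
  apply kS_of_seq
  intro ε hε
  obtain ⟨y, hy⟩ := her_approx hp hpq hε
  exact ⟨_, hy, kS_conj y h⟩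

theorem kS_add {a b c : B} (hb : kS a b) (hc : kS a c) (ha : star a = a) : kS a (b + c) := by
  intro ε hε
  obtain ⟨r2, s2, h1, h2, h3⟩ := hc (ε / 4) (by positivity)
  set M := (‖r2‖ + ‖s2‖ + 1) ^ 2 with hM
  have hr2 := norm_nonneg r2
  have hs2 := norm_nonneg s2
  have hM0 : 1 ≤ M := by nlinarith
  have k1 : ‖r2‖ ≤ M := by nlinarith
  have k2 : ‖s2‖ ≤ M := by nlinarith
  have k3 : ‖r2‖ * ‖r2‖ ≤ M := by nlinarith
  have k4 : ‖r2‖ * ‖s2‖ ≤ M := by nlinarith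
  have k5 : ‖s2‖ * ‖s2‖ ≤ M := by nlinarith
  obtain ⟨r1, s1, g1, g2, g3⟩ := hb (ε / (4 * M)) (by positivity)
  set η := ε / (4 * M) with hη
  have hη0 : 0 < η := by positivity
  have hηM : η * M = ε / 4 := by rw [hη]; field_simp
  have hη1 : η ≤ ε / 4 := by nlinarith
  have g3' : ‖star s1 * a * r1‖ < η := by
    rw [← norm_star]; simpa [star_mul, ha, mul_assoc] using g3
  have conj : ∀ u v w : B, ‖w‖ < η → ‖u‖ * ‖v‖ ≤ M → ‖star u * w * v‖ ≤ ε / 4 := by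
    intro u v w hw huv
    calc ‖star u * w * v‖ ≤ ‖star u‖ * ‖w‖ * ‖v‖ := norm_mul₃_le
      _ = ‖w‖ * (‖u‖ * ‖v‖) := by rw [norm_star]; ring
      _ ≤ η * M := by gcongr
      _ = ε / 4 := hηM
  refine ⟨r1 * r2, r1 * s2 + s1, ?_, ?_, ?_⟩
  · have e : star (r1 * r2) * a * (r1 * r2) - a =
        star r2 * (star r1 * a * r1 - a) * r2 + (star r2 * a * r2 - a) := by
      rw [star_mul]; noncomm_ring
    rw [e]
    have := conj r2 r2 _ g1 k3
    linarith [norm_add_le (star r2 * (star r1 * a * r1 - a) * r2) (star r2 * a * r2 - a)]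
  · have e : star (r1 * s2 + s1) * a * (r1 * s2 + s1) - (b + c) =
        star s2 * (star r1 * a * r1 - a) * s2 + (star s2 * a * s2 - c)
          + (star s1 * a * s1 - b) + (star s2 * (star r1 * a * s1) + (star s1 * a * r1) * s2) := by
      rw [star_add, star_mul]; noncomm_ring
    rw [e]
    have i1 := conj s2 s2 _ g1 k5
    have i2 : ‖star s2 * (star r1 * a * s1)‖ ≤ η * ‖s2‖ := by
      refine (norm_mul_le _ _).trans ?_
      rw [norm_star, mul_comm]; gcongr
    have i3 : ‖(star s1 * a * r1) * s2‖ ≤ η * ‖s2‖ := by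
      refine (norm_mul_le _ _).trans ?_
      gcongr
    have i4 : η * ‖s2‖ * 2 + η ≤ ε / 4 := by
      rw [← hηM]; nlinarith
    have n1 := norm_add_le (star s2 * (star r1 * a * r1 - a) * s2 + (star s2 * a * s2 - c)
          + (star s1 * a * s1 - b)) (star s2 * (star r1 * a * s1) + (star s1 * a * r1) * s2)
    have n2 := norm_add_le (star s2 * (star r1 * a * r1 - a) * s2 + (star s2 * a * s2 - c))
          (star s1 * a * s1 - b)
    have n3 := norm_add_le (star s2 * (star r1 * a * r1 - a) * s2) (star s2 * a * s2 - c)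
    have n4 := norm_add_le (star s2 * (star r1 * a * s1)) ((star s1 * a * r1) * s2)
    linarith
  · have e : star (r1 * r2) * a * (r1 * s2 + s1) =
        star r2 * (star r1 * a * r1 - a) * s2 + star r2 * a * s2 + star r2 * (star r1 * a * s1) := by
      rw [star_mul]; noncomm_ring
    rw [e]
    have i1 := conj r2 s2 _ g1 k4
    have i2 : ‖star r2 * (star r1 * a * s1)‖ ≤ η * ‖r2‖ := by
      refine (norm_mul_le _ _).trans ?_
      rw [norm_star, mul_comm]; gcongr
    have i4 : η * ‖r2‖ ≤ ε / 4 := by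
      rw [← hηM]; nlinarith
    have n1 := norm_add_le (star r2 * (star r1 * a * r1 - a) * s2 + star r2 * a * s2) (star r2 * (star r1 * a * s1))
    have n2 := norm_add_le (star r2 * (star r1 * a * r1 - a) * s2) (star r2 * a * s2)
    linarith

/-- The ideal of infiniteness. -/
def kJ (a : B) : Set B := {x | kS a (star x * x)}

theorem isIdeal_kJ {a : B} (ha : 0 ≤ a) : IsIdeal (kJ a) := by
  have hsm : ∀ (c : ℂ) (b : B), kS a b → kS a (c • (star c • b)) := by
    intro c b hb ε hε
    obtain ⟨r, s, h1, h2, h3⟩ := hb (ε / (‖c‖ ^ 2 + ‖c‖ + 1)) (by positivity)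
    have hz := norm_nonneg c
    have hM0 : 0 < ‖c‖ ^ 2 + ‖c‖ + 1 := by positivity
    have hM1 : ε / (‖c‖ ^ 2 + ‖c‖ + 1) * (‖c‖ ^ 2 + ‖c‖ + 1) = ε := by field_simp
    have hq : 0 < ε / (‖c‖ ^ 2 + ‖c‖ + 1) := by positivity
    refine ⟨r, c • s, ?_, ?_, ?_⟩
    · refine h1.trans_le ?_
      rw [div_le_iff₀ hM0]; nlinarith [sq_nonneg ‖c‖]
    · have e : star (c • s) * a * (c • s) - c • (star c • b) = c • (star c • (star s * a * s - b)) := by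
        simp only [star_smul, smul_mul_assoc, mul_smul_comm, smul_sub]
      rw [e, norm_smul, norm_smul, norm_star]
      nlinarith [norm_nonneg (star s * a * s - b)]
    · rw [mul_smul_comm, norm_smul]
      nlinarith [norm_nonneg (star r * a * s)]
  refine ⟨fun _ _ => trivial, ?_, ?_, ?_, ?_, ?_⟩
  · rw [← isSeqClosed_iff_isClosed]
    intro f x hf hx
    apply kS_of_seq
    intro ε hε
    have h2 := hx.star.mul hx
    obtain ⟨n, hn⟩ := (((tendsto_iff_norm_sub_tendsto_zero.1 h2).eventually (gt_mem_nhds hε))).exists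
    exact ⟨_, hn, hf n⟩
  · simpa [kJ] using kS_zero ha
  · intro x hx y hy
    have hx : kS a (star x * x) := hx
    have hy : kS a (star y * y) := hy
    have := kS_add (kS_add hx hy ha.isSelfAdjoint.star_eq) (kS_add hx hy ha.isSelfAdjoint.star_eq) ha.isSelfAdjoint.star_eq
    refine kS_her (star_mul_self_nonneg _) ?_ this
    rw [← sub_nonneg]
    have e : (star x * x + star y * y + (star x * x + star y * y)) - star (x + y) * (x + y) = star (x - y) * (x - y) := by
      simp only [star_add, star_sub]; noncomm_ring
    rw [e]; exact star_mul_self_nonneg _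
  · intro c x hx
    have hx : kS a (star x * x) := hx
    have := hsm c _ hx
    show kS a _
    simpa only [star_smul, smul_mul_assoc, mul_smul_comm] using this
  · intro x hx c _
    have hx : kS a (star x * x) := hx
    constructor
    · have := hsm (‖c‖ : ℂ) _ hx
      refine kS_her (star_mul_self_nonneg _) ?_ this
      have h1 := CStarAlgebra.star_left_conjugate_le_norm_smul (a := x) (b := star c * c) (IsSelfAdjoint.star_mul_self c)
      have e : ((‖c‖ : ℂ) • (star (‖c‖ : ℂ) • (star x * x))) = ‖star c * c‖ • (star x * x) := by
        rw [CStarRing.norm_star_mul_self]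
        have e1 : star (‖c‖ : ℂ) = (‖c‖ : ℂ) := Complex.conj_ofReal _
        rw [e1, smul_smul, ← Complex.ofReal_mul, Complex.coe_smul]
      rw [e, star_mul]
      simpa [mul_assoc] using h1
    · have := kS_conj c hx
      show kS a _
      rw [star_mul]
      simpa [mul_assoc] using this

theorem kS_iff_sqrt_mem {a b : B} (hb : 0 ≤ b) : kS a b ↔ CFC.sqrt b ∈ kJ a := by
  show _ ↔ kS a _
  rw [sqrt_sa, CFC.sqrt_mul_sqrt_self b hb]

theorem kS_iff_mem {a b : B} (ha : 0 ≤ a) (hb : 0 ≤ b) : kS a b ↔ b ∈ kJ a := by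
  rw [kS_iff_sqrt_mem hb]
  refine ⟨fun h => ?_, id_sqrt (isIdeal_kJ ha) hb⟩
  rw [← CFC.sqrt_mul_sqrt_self b hb]
  exact id_mul_left (isIdeal_kJ ha) _ h


/-- closed right ideal generated (approximately) by `a` -/
def kR (a : B) : Set B := closure {x | ∃ c, x = a * c}

theorem kR_mul_mem (a c : B) : a * c ∈ kR a := subset_closure ⟨c, rfl⟩
theorem kR_closed (a : B) : IsClosed (kR a) := isClosed_closure
theorem kR_seq {a x : B} (hx : x ∈ kR a) : ∃ c : ℕ → B, Tendsto (fun n => a * c n) atTop (𝓝 x) := by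
  obtain ⟨f, hf, hl⟩ := mem_closure_iff_seq_limit.1 hx
  choose c hc using hf
  exact ⟨c, by simpa [← hc] using hl⟩
theorem kR_of_seq {a x : B} {f : ℕ → B} (hf : ∀ n, f n ∈ kR a) (hl : Tendsto f atTop (𝓝 x)) : x ∈ kR a :=
  (kR_closed a).mem_of_tendsto hl (Eventually.of_forall hf)
theorem kR_mul {a x : B} (hx : x ∈ kR a) (c : B) : x * c ∈ kR a := by
  obtain ⟨f, hf⟩ := kR_seq hx
  refine kR_of_seq (f := fun n => a * f n * c) (fun n => ?_) (hf.mul_const c)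
  rw [mul_assoc]; exact kR_mul_mem _ _
theorem kR_sub {a x y : B} (hx : x ∈ kR a) (hy : y ∈ kR a) : x - y ∈ kR a := by
  obtain ⟨f, hf⟩ := kR_seq hx
  obtain ⟨g, hg⟩ := kR_seq hy
  refine kR_of_seq (f := fun n => a * f n - a * g n) (fun n => ?_) (hf.sub hg)
  rw [← mul_sub]; exact kR_mul_mem _ _
theorem kR_trans {a b x : B} (hx : x ∈ kR b) (hb : b ∈ kR a) : x ∈ kR a := by
  obtain ⟨f, hf⟩ := kR_seq hx
  exact kR_of_seq (fun n => kR_mul hb _) hf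
theorem kR_of_le {q s : B} (hq : 0 ≤ q) (h : s * star s ≤ q) : s ∈ kR q := by
  refine kR_of_seq (fun n => ?_) (K1_tendsto hq h)
  rw [kU_eq (by positivity) q hq.isSelfAdjoint, mul_assoc]
  exact kR_mul_mem _ _
theorem kR_sqrt {a : B} (ha : 0 ≤ a) : CFC.sqrt a ∈ kR a :=
  kR_of_le ha (by rw [sqrt_sa, CFC.sqrt_mul_sqrt_self a ha])
theorem kR_self {a : B} (ha : 0 ≤ a) : a ∈ kR a := by
  have := kR_mul (kR_sqrt ha) (CFC.sqrt a)
  rwa [CFC.sqrt_mul_sqrt_self a ha] at this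
theorem kR_seq_sqrt {a x : B} (ha : 0 ≤ a) (hx : x ∈ kR a) :
    ∃ c : ℕ → B, Tendsto (fun n => CFC.sqrt a * c n) atTop (𝓝 x) := by
  obtain ⟨c, hc⟩ := kR_seq hx
  refine ⟨fun n => CFC.sqrt a * c n, ?_⟩
  simpa only [← mul_assoc, CFC.sqrt_mul_sqrt_self a ha] using hc

theorem kR_conv {a b X Y : B} (ha : 0 ≤ a) (hX : X ∈ kR a) (hY : Y ∈ kR a) {ε : ℝ}
    (h1 : ‖star X * X - a‖ < ε) (h2 : ‖star Y * Y - b‖ < ε) (h3 : ‖star X * Y‖ < ε) :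
    ∃ r s : B, ‖star r * a * r - a‖ < ε ∧ ‖star s * a * s - b‖ < ε ∧ ‖star r * a * s‖ < ε := by
  obtain ⟨f, hf⟩ := kR_seq_sqrt ha hX
  obtain ⟨g, hg⟩ := kR_seq_sqrt ha hY
  have t1 := ((hf.star.mul hf).sub_const a).norm.eventually (gt_mem_nhds h1)
  have t2 := ((hg.star.mul hg).sub_const b).norm.eventually (gt_mem_nhds h2)
  have t3 := ((hf.star.mul hg)).norm.eventually (gt_mem_nhds h3)
  obtain ⟨n, i1, i2, i3⟩ := (t1.and (t2.and t3)).exists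
  have e : ∀ u v : B, star (CFC.sqrt a * u) * (CFC.sqrt a * v) = star u * a * v := by
    intro u v
    conv_rhs => rw [← CFC.sqrt_mul_sqrt_self a ha]
    rw [star_mul, sqrt_sa]; noncomm_ring
  rw [e] at i1 i2 i3
  exact ⟨f n, g n, i1, i2, i3⟩

theorem kS_of_PI {a : B} (ha : 0 ≤ a) (h : ProperlyInfinite a) : kS a a := by
  intro ε hε
  obtain ⟨x, y, ⟨c, rfl⟩, ⟨d, rfl⟩, h1, h2, h3⟩ := h (ε / 2) (by positivity)
  exact kR_conv ha (kR_mul_mem a c) (kR_mul_mem a d) (by linarith) (by linarith) (by linarith)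

theorem PI_of_kS {a : B} (ha : 0 ≤ a) (h : kS a a) : ProperlyInfinite a := by
  intro ε hε
  obtain ⟨r, s, h1, h2, h3⟩ := h ε hε
  have e : ∀ u v : B, star (CFC.sqrt a * u) * (CFC.sqrt a * v) = star u * a * v := by
    intro u v
    conv_rhs => rw [← CFC.sqrt_mul_sqrt_self a ha]
    rw [star_mul, sqrt_sa]; noncomm_ring
  rw [← e] at h1 h2 h3
  obtain ⟨f, hf⟩ := kR_seq (kR_mul (kR_sqrt ha) r)
  obtain ⟨g, hg⟩ := kR_seq (kR_mul (kR_sqrt ha) s)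
  have t1 := ((hf.star.mul hf).sub_const a).norm.eventually (gt_mem_nhds h1)
  have t2 := ((hg.star.mul hg).sub_const a).norm.eventually (gt_mem_nhds h2)
  have t3 := ((hf.star.mul hg)).norm.eventually (gt_mem_nhds h3)
  obtain ⟨n, i1, i2, i3⟩ := (t1.and (t2.and t3)).exists
  exact ⟨_, _, ⟨f n, rfl⟩, ⟨g n, rfl⟩, i1.le, i2.le, i3.le⟩

theorem L2 {p x : B} (hp : 0 ≤ p) (h : p ≤ star x * x) : ∃ z ∈ kR x, star z * z = p := by
  set q := star x * x with hq
  have hq0 : 0 ≤ q := star_mul_self_nonneg x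
  have ht := K1_tendsto (s := CFC.sqrt p) hq0 (by rw [sqrt_sa, CFC.sqrt_mul_sqrt_self p hp]; exact h)
  set ρ : ℕ → ℝ := fun n => 1 / ((n : ℝ) + 1) with hρ
  have hρ0 : ∀ n, 0 < ρ n := fun n => by simp only [hρ]; positivity
  set z : ℕ → B := fun n => x * (CFC.sqrt q * kG (ρ n) q * CFC.sqrt p) with hz
  have hqq := CFC.sqrt_mul_sqrt_self q hq0
  have key : ∀ G G' : B, CFC.sqrt q * G = G * CFC.sqrt q → CFC.sqrt q * G' = G' * CFC.sqrt q → 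
      star G = G → star (x * (CFC.sqrt q * G * CFC.sqrt p)) * (x * (CFC.sqrt q * G' * CFC.sqrt p))
      = star (q * G * CFC.sqrt p) * (q * G' * CFC.sqrt p) := by
    intro G G' hG hG' hsG
    simp only [star_mul, sqrt_sa, hsG, hq0.isSelfAdjoint.star_eq]
    have e1 : ∀ u v w : B, u * star x * (x * v) = u * q * v := by
      intro u v w; rw [hq]; noncomm_ring
    rw [e1 _ _ 0]
    generalize CFC.sqrt p = s at *
    generalize CFC.sqrt q = t at *
    clear_value q
    subst hqq
    noncomm_ring
  have hzz : ∀ n, star (z n) * z n = star (kU (ρ n) q * CFC.sqrt p) * (kU (ρ n) q * CFC.sqrt p) := by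
    intro n
    rw [kU_eq (hρ0 n) q hq0.isSelfAdjoint]
    exact key _ _ (sqrt_comm_kG _ _ hq0) (sqrt_comm_kG _ _ hq0) (kG_sa _ _)
  have hdist : ∀ n m, dist (z n) (z m) = dist (kU (ρ n) q * CFC.sqrt p) (kU (ρ m) q * CFC.sqrt p) := by
    intro n m
    rw [dist_eq_norm, dist_eq_norm]
    have e1 : z n - z m = x * (CFC.sqrt q * (kG (ρ n) q - kG (ρ m) q) * CFC.sqrt p) := by
      simp only [hz]; noncomm_ring
    have e2 : kU (ρ n) q * CFC.sqrt p - kU (ρ m) q * CFC.sqrt p = q * (kG (ρ n) q - kG (ρ m) q) * CFC.sqrt p := by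
      rw [kU_eq (hρ0 n) q hq0.isSelfAdjoint, kU_eq (hρ0 m) q hq0.isSelfAdjoint]; noncomm_ring
    have hc : CFC.sqrt q * (kG (ρ n) q - kG (ρ m) q) = (kG (ρ n) q - kG (ρ m) q) * CFC.sqrt q := by
      rw [mul_sub, sub_mul, sqrt_comm_kG _ _ hq0, sqrt_comm_kG _ _ hq0]
    have := key _ _ hc hc (by rw [star_sub, kG_sa, kG_sa])
    rw [e1, e2]
    have h3 := congrArg norm this
    rw [CStarRing.norm_star_mul_self, CStarRing.norm_star_mul_self] at h3
    exact (mul_self_inj (norm_nonneg _) (norm_nonneg _)).1 h3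
  have hcau : CauchySeq z := by
    rw [Metric.cauchySeq_iff]
    simp only [hdist]
    exact Metric.cauchySeq_iff.1 ht.cauchySeq
  obtain ⟨w, hw⟩ := cauchySeq_tendsto_of_complete hcau
  refine ⟨w, kR_of_seq (fun n => kR_mul_mem _ _) hw, ?_⟩
  have h1 := hw.star.mul hw
  simp only [hzz] at h1
  have h2 := ht.star.mul ht
  rw [sqrt_sa, CFC.sqrt_mul_sqrt_self p hp] at h2
  exact tendsto_nhds_unique h1 h2

/-- cut-down `(a - ε)₊` -/
noncomputable def kW (ε : ℝ) (a : B) : B := cfcₙ (fun t : ℝ => max (t - ε) 0) a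

theorem kW_nonneg (ε : ℝ) (a : B) : 0 ≤ kW ε a := cfcₙ_nonneg fun t _ => le_max_right _ _
theorem kW_sa (ε : ℝ) (a : B) : star (kW ε a) = kW ε a := (kW_nonneg ε a).isSelfAdjoint.star_eq

theorem kW_norm {ε : ℝ} (hε : 0 ≤ ε) {a : B} (ha : 0 ≤ a) : ‖kW ε a - a‖ ≤ ε := by
  have : kW ε a - a = cfcₙ (fun t : ℝ => max (t - ε) 0 - t) a := by
    rw [cfcₙ_sub (hf := by fun_prop) (hg := by fun_prop) (hf0 := by simpa using hε), cfcₙ_id' ℝ a]; rfl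
  rw [this]
  refine norm_cfcₙ_le fun t ht => ?_
  have ht0 : 0 ≤ t := quasispectrum_nonneg_of_nonneg a ha t ht
  rw [Real.norm_eq_abs, abs_le]
  constructor
  · linarith [le_max_left (t - ε) 0]
  · rcases max_cases (t - ε) 0 with h | h <;> linarith [h.1, h.2]

theorem kW_tendsto {a : B} (ha : 0 ≤ a) :
    Tendsto (fun n : ℕ => kW (1 / ((n : ℝ) + 1)) a) atTop (𝓝 a) := by
  rw [tendsto_iff_norm_sub_tendsto_zero]
  exact squeeze_zero (fun _ => norm_nonneg _) (fun n => kW_norm (by positivity) ha)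
    tendsto_one_div_add_atTop_nhds_zero_nat

theorem kW_comm {ε : ℝ} {a x : B} (hx : Commute a x) (ha : 0 ≤ a) : Commute (kW ε a) x := by
  exact Commute.cfcₙ_real hx _

theorem kW_cube {ε : ℝ} (hε : 0 ≤ ε) {a : B} (ha : 0 ≤ a) :
    kW ε a * kW ε a * kW ε a = kW ε a * a * kW ε a - ε • (kW ε a * kW ε a) := by
  have h0 : (fun t : ℝ => max (t - ε) 0) 0 = 0 := by simpa using hε
  have gen : ∀ f : ℝ → ℝ, Continuous f → f 0 = 0 → (∀ t, f t * f t * f t = f t * t * f t - ε • (f t * f t)) →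
     cfcₙ f a * cfcₙ f a * cfcₙ f a = cfcₙ f a * a * cfcₙ f a - ε • (cfcₙ f a * cfcₙ f a) := by
    intro f hf hf0 hh
    have : cfcₙ (fun t => f t * f t * f t) a = cfcₙ (fun t => f t * t * f t - ε • (f t * f t)) a := by
      congr 1; exact funext hh
    rw [cfcₙ_sub (hf := by fun_prop) (hg := by fun_prop) (hg0 := by simp [hf0]),
      cfcₙ_smul ε (fun t => f t * f t) a (hf := by fun_prop) (h0 := by simp [hf0]),
      cfcₙ_mul (hf := by fun_prop) (hg := by fun_prop) (hf0 := by simp [hf0]),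
      cfcₙ_mul (hf := by fun_prop) (hg := by fun_prop),
      cfcₙ_mul (hf := by fun_prop) (hg := by fun_prop) (hf0 := by simp [hf0]),
      cfcₙ_mul (hf := by fun_prop) (hg := by fun_prop), cfcₙ_id' ℝ a] at this
    exact this
  refine gen _ (by fun_prop) h0 fun t => ?_
  rcases max_cases (t - ε) 0 with h | h <;> simp only [h.1, smul_eq_mul] <;> ring

theorem rordam {a b : B} (ha : 0 ≤ a) (hb : 0 ≤ b) (h : CuntzBelow a b) {ε : ℝ} (hε : 0 < ε) :
    ∃ z ∈ kR b, star z * z = kW ε a * kW ε a * kW ε a := by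
  obtain ⟨r, hr⟩ := h ε hε
  set w := kW ε a with hw
  have hwsa : star w = w := kW_sa ε a
  have hle : w * w * w ≤ star (CFC.sqrt b * r * w) * (CFC.sqrt b * r * w) := by
    have hysa : IsSelfAdjoint (a - star r * b * r) := by
      rw [IsSelfAdjoint, star_sub, ha.isSelfAdjoint.star_eq, star_mul, star_mul, star_star, hb.isSelfAdjoint.star_eq, mul_assoc]
    have h1 := CStarAlgebra.star_left_conjugate_le_norm_smul (a := w) (b := a - star r * b * r) hysa
    have h2 : ‖a - star r * b * r‖ • (star w * w) ≤ ε • (star w * w) := 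
      smul_le_smul_of_nonneg_right hr.le (star_mul_self_nonneg w)
    have h3 := h1.trans h2
    rw [hwsa] at h3
    rw [hw, kW_cube hε.le ha, ← hw]
    have e : star (CFC.sqrt b * r * w) * (CFC.sqrt b * r * w) = w * (star r * b * r) * w := by
      conv_rhs => rw [← CFC.sqrt_mul_sqrt_self b hb]
      simp only [star_mul, sqrt_sa, hwsa]; noncomm_ring
    rw [e, sub_le_iff_le_add]
    rw [mul_sub, sub_mul, sub_le_iff_le_add] at h3
    rwa [add_comm]
  obtain ⟨z, hz, hzz⟩ := L2 (p := w * w * w) (by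
    have := star_left_conjugate_nonneg (kW_nonneg ε a) w
    rwa [hwsa] at this) hle
  refine ⟨z, kR_trans hz ?_, hzz⟩
  rw [mul_assoc]
  exact kR_mul (kR_sqrt hb) _


/-- clipping function -/
def kc (k t : ℝ) : ℝ := min (max (t - k) 0) 1
noncomputable def kC (k : ℝ) (h : B) : B := cfcₙ (kc k) h

theorem kc_cont (k : ℝ) : Continuous (kc k) := by unfold kc; fun_prop
theorem kc_zero {k : ℝ} (hk : 0 ≤ k) : kc k 0 = 0 := by
  unfold kc; rw [max_eq_right (by linarith)]; simp
theorem kc_nonneg (k t : ℝ) : 0 ≤ kc k t := le_min (le_max_right _ _) zero_le_one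
theorem kc_le_one (k t : ℝ) : kc k t ≤ 1 := min_le_right _ _
theorem kc_anti {k l : ℝ} (h : k ≤ l) (t : ℝ) : kc l t ≤ kc k t := by
  unfold kc; gcongr
theorem kc_mul (k t : ℝ) : kc k t * kc (k + 1) t = kc (k + 1) t := by
  rcases le_total t (k + 1) with h | h
  · have : kc (k + 1) t = 0 := by unfold kc; rw [max_eq_right (by linarith)]; simp
    simp [this]
  · have : kc k t = 1 := by
      unfold kc; rw [max_eq_left (by linarith), min_eq_right (by linarith)]
    simp [this]
theorem kc_sum {t : ℝ} (ht : 0 ≤ t) (n : ℕ) : ∑ k ∈ Finset.range n, kc k t = min t n := by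
  induction n with
  | zero => simp [ht]
  | succ n ih =>
    rw [Finset.sum_range_succ, ih]
    unfold kc
    push_cast
    rcases le_total t n with h | h
    · rw [min_eq_left h, max_eq_right (by linarith), min_eq_left (by linarith), min_eq_left (by linarith)]; simp
    · rw [min_eq_right h, max_eq_left (by linarith)]
      rcases le_total t (n + 1) with h' | h'
      · rw [min_eq_left (by linarith), min_eq_left h']; ring
      · rw [min_eq_right (by linarith), min_eq_right h']

theorem kC_nonneg (k : ℝ) (h : B) : 0 ≤ kC k h := cfcₙ_nonneg fun t _ => kc_nonneg k t
theorem kC_sa (k : ℝ) (h : B) : star (kC k h) = kC k h := (kC_nonneg k h).isSelfAdjoint.star_eq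
theorem kC_norm (k : ℝ) (h : B) : ‖kC k h‖ ≤ 1 := by
  refine norm_cfcₙ_le fun t _ => ?_
  rw [Real.norm_of_nonneg (kc_nonneg _ _)]; exact kc_le_one _ _
theorem kC_mul {k : ℝ} (hk : 0 ≤ k) (h : B) : kC k h * kC (k + 1) h = kC (k + 1) h := by
  unfold kC
  rw [← cfcₙ_mul (hf := (kc_cont _).continuousOn) (hg := (kc_cont _).continuousOn) (hf0 := kc_zero hk) (hg0 := kc_zero (by linarith))]
  congr 1; funext t; exact kc_mul k t
theorem kC_mul' {k : ℝ} (hk : 0 ≤ k) (h : B) : kC (k + 1) h * kC k h = kC (k + 1) h := by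
  have := congrArg star (kC_mul hk h)
  rwa [star_mul, kC_sa, kC_sa] at this
theorem kC_le {h : B} (hh : 0 ≤ h) : kC 0 h ≤ h := by
  conv_rhs => rw [← cfcₙ_id' ℝ h]
  refine cfcₙ_mono (fun t ht => ?_) (hf := (kc_cont _).continuousOn) (hf0 := kc_zero le_rfl)
  have ht0 : 0 ≤ t := quasispectrum_nonneg_of_nonneg h hh t ht
  unfold kc
  rw [sub_zero, max_eq_left ht0]; exact min_le_left _ _

theorem kC_approx {N : Set B} (hN : IsIdeal N) {a : B} (ha : 0 ≤ a)
    (h : ∀ n : ℕ, kC 1 (((n : ℝ) + 1) • a) ∈ N) : a ∈ N := by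
  have key : ∀ s : B, 0 ≤ s → ‖s * kC 1 s - s‖ ≤ 2 := by
    intro s hs
    have : s * kC 1 s - s = cfcₙ (fun t => t * kc 1 t - t) s := by
      have hc := kc_cont 1
      have hc0 := kc_zero (zero_le_one)
      rw [cfcₙ_sub (hf := by fun_prop) (hg := by fun_prop),
        cfcₙ_mul (hf := by fun_prop) (hg := by fun_prop), cfcₙ_id' ℝ s]; rfl
    rw [this]
    refine norm_cfcₙ_le fun t ht => ?_
    have ht0 : 0 ≤ t := quasispectrum_nonneg_of_nonneg s hs t ht
    have e : t * kc 1 t - t = - (t * (1 - kc 1 t)) := by ring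
    rw [e, norm_neg, Real.norm_of_nonneg (mul_nonneg ht0 (by linarith [kc_le_one 1 t]))]
    rcases le_total t 2 with h2 | h2
    · nlinarith [kc_nonneg 1 t]
    · have : kc 1 t = 1 := by
        unfold kc; rw [max_eq_left (by linarith), min_eq_right (by linarith)]
      rw [this]; simp
  refine id_lim hN (f := fun n : ℕ => a * kC 1 (((n : ℝ) + 1) • a)) (fun n => id_mul_left hN _ (h n)) ?_
  rw [tendsto_iff_norm_sub_tendsto_zero]
  have hb : ∀ n : ℕ, ‖a * kC 1 (((n : ℝ) + 1) • a) - a‖ ≤ 2 * (1 / ((n : ℝ) + 1)) := by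
    intro n
    have hn : (0 : ℝ) < (n : ℝ) + 1 := by positivity
    have h1 := key (((n : ℝ) + 1) • a) (smul_nonneg hn.le ha)
    rw [smul_mul_assoc, ← smul_sub, norm_smul, Real.norm_of_nonneg hn.le] at h1
    rw [mul_one_div, le_div_iff₀ hn]; linarith
  refine squeeze_zero (fun _ => norm_nonneg _) hb ?_
  simpa using (tendsto_one_div_add_atTop_nhds_zero_nat (𝕜 := ℝ)).const_mul 2

theorem comm_step {J K : Set B} (hJ : IsIdeal J) (hK : IsIdeal K)
    (hsq : ∀ x ∈ K, x * x = 0 → x ∈ J) {a b c y : B} (hy : y ∈ K) (hys : star y = y)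
    (ha : star a = a) (hb : star b = b) (hc : star c = c)
    (hab : a * b = b) (hba : b * a = b) (hbc : b * c = c) (hcb : c * b = c) :
    (b * y - y * b) - (a - c) * (b * y - y * b) * (a - c) ∈ J := by
  have x1 : y * b - a * y * b ∈ J := by
    apply hsq
    · exact id_sub hK (id_mul_right hK _ hy) (id_mul_right hK _ (id_mul_left hK _ hy))
    · have e : (y * b - a * y * b) * (y * b - a * y * b) = y * (b - b * a) * y * b - a * y * (b - b * a) * y * b := by
        noncomm_ring
      rw [e, hba]; simp
  have x2 : c * y - c * y * b ∈ J := by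
    apply hsq
    · exact id_sub hK (id_mul_left hK _ hy) (id_mul_right hK _ (id_mul_left hK _ hy))
    · have e : (c * y - c * y * b) * (c * y - c * y * b) = c * y * (c - b * c) * y - c * y * (c - b * c) * y * b := by
        noncomm_ring
      rw [e, hbc]; simp
  have h1 : (b * y - y * b) - (a - c) * (b * y - y * b) ∈ J := by
    have e : (b * y - y * b) - (a - c) * (b * y - y * b) = (c * y - c * y * b) - (y * b - a * y * b)
       + ((b - a * b) * y - (c - c * b) * y) := by noncomm_ring
    rw [e, hab, hcb]; simp only [sub_self, zero_mul, add_zero]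
    exact id_sub hJ x2 x1
  have h2 := id_neg hJ (id_star hJ h1)
  have e : (b * y - y * b) - (a - c) * (b * y - y * b) * (a - c) =
    ((b * y - y * b) - (a - c) * (b * y - y * b)) + (a - c) * -(star ((b * y - y * b) - (a - c) * (b * y - y * b))) := by
    simp only [star_sub, star_mul, ha, hb, hc, hys]; noncomm_ring
  rw [e]
  exact id_add hJ h1 (id_mul_left hJ _ h2)

theorem sandwich_norm {Z T : B} (h1 : -T ≤ Z) (h2 : Z ≤ T) : ‖Z‖ ≤ 3 * ‖T‖ := by
  have h3 : 0 ≤ Z + T := by rw [← sub_neg_eq_add]; exact sub_nonneg.2 h1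
  have h4 : Z + T ≤ T + T := by gcongr
  have := CStarAlgebra.norm_le_norm_of_nonneg_of_le h3 h4
  have e : Z = (Z + T) - T := by abel
  calc ‖Z‖ = ‖(Z + T) - T‖ := by rw [← e]
    _ ≤ ‖Z + T‖ + ‖T‖ := norm_sub_le _ _
    _ ≤ ‖T + T‖ + ‖T‖ := by gcongr
    _ ≤ _ := by linarith [norm_add_le T T]

theorem comm_approx {J K : Set B} (hJ : IsIdeal J) (hK : IsIdeal K)
    (hsq : ∀ x ∈ K, x * x = 0 → x ∈ J) {h y : B} (hh : 0 ≤ h) (hy : y ∈ K) (hys : star y = y) :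
    ∃ v ∈ J, ‖(h * y - y * h) - v‖ ≤ 14 * ‖y‖ := by
  obtain ⟨N, hN⟩ := exists_nat_ge ‖h‖
  have hsum : h = ∑ k ∈ Finset.range (N + 1), kC (k : ℝ) h := by
    have h1 : cfcₙ (∑ k ∈ Finset.range (N + 1), kc (k : ℝ)) h = ∑ k ∈ Finset.range (N + 1), kC (k : ℝ) h := by
      unfold kC
      exact cfcₙ_sum _ _ _ (fun k _ => (kc_cont _).continuousOn) (fun k _ => kc_zero (by positivity))
    rw [← h1]
    conv_lhs => rw [← cfcₙ_id' ℝ h]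
    refine cfcₙ_congr fun t ht => ?_
    have ht0 : 0 ≤ t := quasispectrum_nonneg_of_nonneg h hh t ht
    have ht1 : t ≤ ‖h‖ := by
      have := NonUnitalIsometricContinuousFunctionalCalculus.norm_quasispectrum_le h ht (𝕜 := ℝ)
      exact (le_abs_self t).trans this
    simp only [Finset.sum_apply]
    rw [kc_sum ht0, min_eq_left]; push_cast; linarith
  set w : ℕ → B := fun k => kC (k : ℝ) h * y - y * kC (k : ℝ) h with hw
  set e : ℕ → B := fun j => kC (j : ℝ) h - kC ((j + 2 : ℕ) : ℝ) h with he
  have hesa : ∀ j, star (e j) = e j := fun j => by simp only [he, star_sub, kC_sa]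
  have hwn : ∀ k, ‖w k‖ ≤ 2 * ‖y‖ := by
    intro k
    have h1 := norm_sub_le (kC (k : ℝ) h * y) (y * kC (k : ℝ) h)
    have h2 := norm_mul_le (kC (k : ℝ) h) y
    have h3 := norm_mul_le y (kC (k : ℝ) h)
    have h4 := kC_norm (k : ℝ) h
    have h5 := norm_nonneg y
    simp only [hw]; nlinarith
  have hcomm : h * y - y * h = ∑ j ∈ Finset.range N, w (j + 1) + w 0 := by
    rw [← Finset.sum_range_succ']
    conv_lhs => rw [hsum, Finset.sum_mul, Finset.mul_sum, ← Finset.sum_sub_distrib]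
  have hstep : ∀ j, w (j + 1) - e j * w (j + 1) * e j ∈ J := by
    intro j
    have q1 := kC_mul (k := (j : ℝ)) (by positivity) h
    have q2 := kC_mul' (k := (j : ℝ)) (by positivity) h
    have q3 := kC_mul (k := (j : ℝ) + 1) (by positivity) h
    have q4 := kC_mul' (k := (j : ℝ) + 1) (by positivity) h
    have := comm_step hJ hK hsq hy hys (kC_sa (j : ℝ) h) (kC_sa ((j : ℝ) + 1) h) (kC_sa ((j : ℝ) + 1 + 1) h) q1 q2 q3 q4
    simp only [hw, he]
    have e2 : ((j + 2 : ℕ) : ℝ) = (j : ℝ) + 1 + 1 := by push_cast; ring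
    rw [e2]; push_cast
    exact this
  refine ⟨∑ j ∈ Finset.range N, (w (j + 1) - e j * w (j + 1) * e j), id_sum hJ _ _ fun j _ => hstep j, ?_⟩
  have e1 : (h * y - y * h) - ∑ j ∈ Finset.range N, (w (j + 1) - e j * w (j + 1) * e j)
      = w 0 + ∑ j ∈ Finset.range N, e j * w (j + 1) * e j := by
    rw [hcomm, Finset.sum_sub_distrib (fun j => w (j + 1)) (fun j => e j * w (j + 1) * e j)]; abel
  rw [e1]
  set T : B := ∑ j ∈ Finset.range N, (2 * ‖y‖) • (e j * e j) with hT
  set Z : B := ∑ j ∈ Finset.range N, e j * (Complex.I • w (j + 1)) * e j with hZ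
  have hZn : ‖∑ j ∈ Finset.range N, e j * w (j + 1) * e j‖ = ‖Z‖ := by
    have : Z = Complex.I • ∑ j ∈ Finset.range N, e j * w (j + 1) * e j := by
      rw [hZ, Finset.smul_sum]
      refine Finset.sum_congr rfl fun j _ => ?_
      rw [mul_smul_comm, smul_mul_assoc]
    rw [this, norm_smul]; simp
  have hzsa : ∀ k, IsSelfAdjoint (Complex.I • w k) := by
    intro k
    rw [IsSelfAdjoint, star_smul]
    simp only [hw, star_sub, star_mul, kC_sa, hys, Complex.star_def, Complex.conj_I]
    rw [neg_smul, ← smul_neg, neg_sub]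
  have hzn : ∀ k, ‖Complex.I • w k‖ ≤ 2 * ‖y‖ := fun k => by
    rw [norm_smul]; simpa using hwn k
  have up : ∀ j (z : B), IsSelfAdjoint z → ‖z‖ ≤ 2 * ‖y‖ → e j * z * e j ≤ (2 * ‖y‖) • (e j * e j) := by
    intro j z hz hn
    have := CStarAlgebra.star_left_conjugate_le_norm_smul (a := e j) hz
    have h0 := star_mul_self_nonneg (e j)
    rw [hesa] at this h0
    exact this.trans (smul_le_smul_of_nonneg_right hn h0)
  have hZT : Z ≤ T := Finset.sum_le_sum fun j _ => up j _ (hzsa _) (hzn _)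
  have hTZ : -T ≤ Z := by
    rw [neg_le, hZ, ← Finset.sum_neg_distrib]
    refine Finset.sum_le_sum fun j _ => ?_
    have := up j (-(Complex.I • w (j + 1))) (hzsa _).neg (by rw [norm_neg]; exact hzn _)
    simpa using this
  have hTn : ‖T‖ ≤ 2 * ‖y‖ * 2 := by
    rw [hT, ← Finset.smul_sum, norm_smul, Real.norm_of_nonneg (by positivity)]
    gcongr
    have : ∑ j ∈ Finset.range N, e j * e j = cfcₙ (∑ j ∈ Finset.range N, fun t =>
        (kc (j : ℝ) t - kc ((j + 2 : ℕ) : ℝ) t) * (kc (j : ℝ) t - kc ((j + 2 : ℕ) : ℝ) t)) h := by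
      have hcc : ∀ j : ℕ, Continuous (kc (j : ℝ)) := fun j => kc_cont _
      have hc0 : ∀ j : ℕ, kc (j : ℝ) 0 = 0 := fun j => kc_zero (by positivity)
      rw [cfcₙ_sum _ _ _ (fun j _ => by have := hcc j; have := hcc (j + 2); fun_prop) (fun j _ => by simp only [hc0]; simp)]
      refine Finset.sum_congr rfl fun j _ => ?_
      have c1 := hcc j
      have c2 := hcc (j + 2)
      rw [cfcₙ_mul (hf := by fun_prop) (hg := by fun_prop) (hf0 := by simp only [hc0]; simp) (hg0 := by simp only [hc0]; simp),
        cfcₙ_sub (hf := by fun_prop) (hg := by fun_prop) (hf0 := hc0 _) (hg0 := hc0 _)]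
      rfl
    rw [this]
    refine norm_cfcₙ_le fun t ht => ?_
    simp only [Finset.sum_apply]
    rw [Real.norm_of_nonneg (Finset.sum_nonneg fun j _ => mul_self_nonneg _)]
    have i1 : ∀ n : ℕ, ∑ j ∈ Finset.range n, (kc (j : ℝ) t - kc ((j + 2 : ℕ) : ℝ) t)
        = kc ((0 : ℕ) : ℝ) t + kc ((1 : ℕ) : ℝ) t - kc (n : ℝ) t - kc ((n + 1 : ℕ) : ℝ) t := by
      intro n
      induction n with
      | zero => simp
      | succ n ih => rw [Finset.sum_range_succ, ih]; ring
    have i2 : ∑ j ∈ Finset.range N, (kc (j : ℝ) t - kc ((j + 2 : ℕ) : ℝ) t) * (kc (j : ℝ) t - kc ((j + 2 : ℕ) : ℝ) t)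
       ≤ ∑ j ∈ Finset.range N, (kc (j : ℝ) t - kc ((j + 2 : ℕ) : ℝ) t) := by
      refine Finset.sum_le_sum fun j _ => ?_
      have a1 := kc_anti (k := (j : ℝ)) (l := ((j + 2 : ℕ) : ℝ)) (by push_cast; linarith) t
      have a2 := kc_le_one (j : ℝ) t
      have a3 := kc_nonneg ((j + 2 : ℕ) : ℝ) t
      nlinarith
    rw [i1] at i2
    linarith [kc_le_one ((0 : ℕ) : ℝ) t, kc_le_one ((1 : ℕ) : ℝ) t, kc_nonneg (N : ℝ) t, kc_nonneg ((N + 1 : ℕ) : ℝ) t]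
  have f1 := norm_add_le (w 0) (∑ j ∈ Finset.range N, e j * w (j + 1) * e j)
  have f2 := sandwich_norm hTZ hZT
  have f3 := hwn 0
  rw [hZn] at f1
  linarith

theorem comm_mem {J K : Set B} (hJ : IsIdeal J) (hK : IsIdeal K)
    (hsq : ∀ x ∈ K, x * x = 0 → x ∈ J) {h y : B} (hh : 0 ≤ h) (hy : y ∈ K) (hys : star y = y) :
    h * y - y * h ∈ J := by
  have : ∀ n : ℕ, ∃ v ∈ J, ‖v - (h * y - y * h)‖ ≤ 14 * ‖y‖ * (1 / ((n : ℝ) + 1)) := by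
    intro n
    have hn : (0 : ℝ) < (n : ℝ) + 1 := by positivity
    obtain ⟨v, hv, hb⟩ := comm_approx hJ hK hsq (h := ((n : ℝ) + 1) • h) (smul_nonneg hn.le hh) hy hys
    refine ⟨((n : ℝ) + 1)⁻¹ • v, id_rsmul hJ _ hv, ?_⟩
    have e : ((n : ℝ) + 1) • h * y - y * ((n : ℝ) + 1) • h - v =
        -(((n : ℝ) + 1) • (((n : ℝ) + 1)⁻¹ • v - (h * y - y * h))) := by
      rw [smul_mul_assoc, mul_smul_comm, smul_sub, smul_sub, smul_inv_smul₀ hn.ne']; abel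
    rw [e, norm_neg, norm_smul, Real.norm_of_nonneg hn.le] at hb
    rw [mul_one_div, le_div_iff₀ hn]; linarith
  choose v hv hb using this
  refine id_lim hJ hv ?_
  rw [tendsto_iff_norm_sub_tendsto_zero]
  refine squeeze_zero (fun _ => norm_nonneg _) hb ?_
  simpa using (tendsto_one_div_add_atTop_nhds_zero_nat (𝕜 := ℝ)).const_mul (14 * ‖y‖)

theorem comm_mem' {J K : Set B} (hJ : IsIdeal J) (hK : IsIdeal K)
    (hsq : ∀ x ∈ K, x * x = 0 → x ∈ J) {h y : B} (hh : 0 ≤ h) (hy : y ∈ K) :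
    h * y - y * h ∈ J := by
  have hy' := id_star hK hy
  have h1 := comm_mem hJ hK hsq hh (id_add hK hy hy') (by rw [star_add, star_star, add_comm])
  have h2 := comm_mem hJ hK hsq hh (y := Complex.I • (y - star y)) (id_smul hK _ (id_sub hK hy hy')) (by
    rw [star_smul, star_sub, star_star, Complex.star_def, Complex.conj_I, neg_smul, ← smul_neg, neg_sub])
  have h3 := id_smul hJ (-Complex.I) h2
  have h4 := id_smul hJ (1/2) (id_add hJ h1 h3)
  convert h4 using 1
  rw [mul_smul_comm, smul_mul_assoc, ← smul_sub, smul_smul]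
  simp only [neg_mul, Complex.I_mul_I, neg_neg, one_smul]
  have e : h * (y + star y) - (y + star y) * h + (h * (y - star y) - (y - star y) * h) = (2 : ℂ) • (h * y - y * h) := by
    rw [two_smul]; noncomm_ring
  rw [e, smul_smul]; norm_num


theorem exists_character {N : Set B} (hN : IsIdeal N) (hc : ∀ x y : B, x * y - y * x ∈ N)
    (hne : ∃ x, x ∉ N) : ∃ φ : B →ₗ[ℂ] ℂ, IsCharacter φ := by
  obtain ⟨x, hx⟩ := hne
  have ha : star x * x ∉ N := fun h => hx (id_of_star_mul hN h)
  have ha0 : 0 ≤ star x * x := star_mul_self_nonneg x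
  have : ∃ n : ℕ, kC 1 (((n : ℝ) + 1) • (star x * x)) ∉ N := by
    by_contra! hcon
    exact ha (kC_approx hN ha0 hcon)
  obtain ⟨n, hn⟩ := this
  set s := ((n : ℝ) + 1) • (star x * x) with hs
  have hpq : kC 1 s * kC 0 s = kC 1 s := by
    have := kC_mul' (k := 0) le_rfl s
    simpa using this
  let I : Ideal (Unitization ℂ B) :=
    { carrier := Set.image (fun b : B => (b : Unitization ℂ B)) N
      zero_mem' := ⟨0, id_zero hN, by simp⟩
      add_mem' := by
        rintro _ _ ⟨a, ha, rfl⟩ ⟨b, hb, rfl⟩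
        exact ⟨a + b, id_add hN ha hb, by simp⟩
      smul_mem' := by
        rintro c _ ⟨b, hb, rfl⟩
        induction c using Unitization.ind with
        | inl_add_inr r a =>
        refine ⟨r • b + a * b, id_add hN (id_smul hN _ hb) (id_mul_left hN _ hb), ?_⟩
        simp [add_mul, Unitization.inl_mul_inr] }
  have hI2 : I.IsTwoSided := ⟨by
    rintro _ c ⟨b, hb, rfl⟩
    induction c using Unitization.ind with
    | inl_add_inr r a =>
    refine ⟨r • b + b * a, id_add hN (id_smul hN _ hb) (id_mul_right hN _ hb), ?_⟩
    simp [mul_add, Unitization.inr_mul_inl]⟩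
  have hIc : IsClosed (I : Set (Unitization ℂ B)) :=
    (Unitization.isometry_inr (𝕜 := ℂ) (A := B)).isClosedEmbedding.isClosedMap _ (id_closed hN)
  have hcom : ∀ x y : Unitization ℂ B, x * y - y * x ∈ I := by
    intro u v
    induction u using Unitization.ind with
    | inl_add_inr r a =>
    induction v using Unitization.ind with
    | inl_add_inr t b =>
    refine ⟨a * b - b * a, hc a b, ?_⟩
    rw [eq_sub_iff_add_eq]
    ext
    · simp only [Unitization.fst_mul, Unitization.fst_add, Unitization.fst_inl, Unitization.fst_inr]; ring
    · simp only [Unitization.snd_mul, Unitization.snd_add, Unitization.snd_inl, Unitization.snd_inr, Unitization.fst_add, Unitization.fst_inl, Unitization.fst_inr, smul_add, zero_add, add_zero]; abel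
  obtain ⟨χ, hχ⟩ := exists_char_of_quot I hIc hcom (Unitization.inr (kC 1 s)) (1 - Unitization.inr (kC 0 s))
    (by
      rintro ⟨b, hb, hbe⟩
      exact hn (Unitization.inr_injective hbe ▸ hb))
    (by
      rw [mul_sub, mul_one, ← Unitization.inr_mul, hpq, sub_self]
      exact I.zero_mem)
  refine ⟨χ.toLinearMap.comp (Unitization.inrHom ℂ ℂ B), ?_, ?_⟩
  · intro x y
    simp
  · intro h0
    have := LinearMap.congr_fun h0 (kC 0 s)
    simp at this hχ
    rw [this] at hχ
    simp at hχ

/-- Characters are bounded. -/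
theorem character_bound {φ : B →ₗ[ℂ] ℂ} (h : IsCharacter φ) (x : B) : ‖φ x‖ ≤ ‖x‖ := by
  let f : B →ₙₐ[ℂ] ℂ := { φ with
    map_mul' := h.1
    map_zero' := map_zero φ
    map_smul' := fun c x => by simp }
  let g : Unitization ℂ B →ₐ[ℂ] ℂ := Unitization.lift f
  have h1 : g (x : Unitization ℂ B) = φ x := by
    simp [g, f]
  rw [← h1, ← Unitization.norm_inr (𝕜 := ℂ) x]
  have := spectrum.norm_le_norm_mul_of_mem (AlgHom.apply_mem_spectrum g (x : Unitization ℂ B))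
  simpa using this


theorem kR_mem_of_le {p q : B} (hp : 0 ≤ p) (h : p ≤ q) : p ∈ kR q := by
  have := kR_mul (kR_of_le (s := CFC.sqrt p) (hp.trans h)
    (by rw [sqrt_sa, CFC.sqrt_mul_sqrt_self p hp]; exact h)) (CFC.sqrt p)
  rwa [CFC.sqrt_mul_sqrt_self p hp] at this

theorem step_her (hpi : PurelyInfinite B) {a : B} (ha : 0 ≤ a) (ha0 : a ≠ 0) {x : B}
    (hx : x ∈ kR a) (hx' : star x ∈ kR a) (hxx : x * x = 0) : x ∈ kJ a := by
  have hJ := isIdeal_kJ ha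
  have hc0 : 0 ≤ star x * x := star_mul_self_nonneg x
  apply id_of_star_mul hJ
  refine kC_approx hJ hc0 fun n => ?_
  have hn : (0 : ℝ) < (n : ℝ) + 1 := by positivity
  set s := ((n : ℝ) + 1) • (star x * x) with hs
  have hs0 : 0 ≤ s := smul_nonneg hn.le hc0
  set g := kC 0 s with hg
  set φ := kC 1 s with hφ
  have hgφ : g * φ = φ := by
    have := kC_mul (k := 0) le_rfl s
    simpa using this
  have hgs : g ≤ s := kC_le hs0
  have hg0 : 0 ≤ g := kC_nonneg 0 s
  have hgsa : star g = g := kC_sa 0 s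
  have hφsa : star φ = φ := kC_sa 1 s
  have hgx : g * x = 0 := by
    have h1 : star x * g * x ≤ star x * s * x := star_left_conjugate_le_conjugate hgs x
    have h2 : star x * s * x = 0 := by
      rw [hs, mul_smul_comm, smul_mul_assoc, mul_assoc, mul_assoc, hxx]; simp
    rw [h2] at h1
    have h3 := le_antisymm h1 (star_left_conjugate_nonneg hg0 x)
    have h4 : star (CFC.sqrt g * x) * (CFC.sqrt g * x) = 0 := by
      rw [star_mul, sqrt_sa, ← h3]
      conv_rhs => rw [← CFC.sqrt_mul_sqrt_self g hg0]
      noncomm_ring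
    rw [CStarRing.star_mul_self_eq_zero_iff] at h4
    rw [← CFC.sqrt_mul_sqrt_self g hg0, mul_assoc, h4, mul_zero]
  have hgR : g ∈ kR a := by
    refine kR_trans (kR_mem_of_le hg0 hgs) ?_
    rw [hs, ← mul_smul_comm]
    exact kR_mul hx' _
  set v := CFC.sqrt a - g * CFC.sqrt a with hv
  set e := v * star v with he
  have he0 : 0 ≤ e := mul_star_self_nonneg v
  have hvR : v ∈ kR a := kR_sub (kR_sqrt ha) (kR_mul hgR _)
  obtain ⟨y, hy⟩ := kR_seq_sqrt ha hx
  have hxl : Tendsto (fun n => v * y n) atTop (𝓝 x) := by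
    have := hy.sub (hy.const_mul g)
    rw [hgx, sub_zero] at this
    refine this.congr fun n => ?_
    rw [hv]; noncomm_ring
  by_cases hez : e = 0
  · have hv0 : v = 0 := by rwa [he, CStarRing.mul_star_self_eq_zero_iff] at hez
    have hx0 : x = 0 := by
      rw [hv0] at hxl
      simp only [zero_mul] at hxl
      exact tendsto_nhds_unique hxl tendsto_const_nhds
    have : φ = 0 := by
      have hs00 : s = 0 := by rw [hs, hx0]; simp
      rw [hφ, hs00]; unfold kC; simp
    rw [this]; exact id_zero hJ
  have hI := isIdeal_idealGen ({e} : Set B)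
  have hvI : v ∈ idealGen {e} := by
    have : star v ∈ idealGen {e} := id_of_star_mul hI (by rw [star_star]; exact self_mem_idealGen e)
    simpa using id_star hI this
  have hxI : x ∈ idealGen {e} := id_lim hI (fun n => id_mul_right hI _ hvI) hxl
  have hgI : g ∈ idealGen {e} :=
    id_her' hI hg0 hgs (id_rsmul hI _ (id_mul_left hI _ hxI))
  have hsaI : CFC.sqrt a ∈ idealGen {e} := by
    have : CFC.sqrt a = v + g * CFC.sqrt a := by rw [hv]; abel
    rw [this]; exact id_add hI hvI (id_mul_right hI _ hgI)
  have haI : a ∈ idealGen {e} := by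
    have := id_mul_left hI (CFC.sqrt a) hsaI
    rwa [CFC.sqrt_mul_sqrt_self a ha] at this
  have hcb := (hpi.2 a e ha ha0 he0 hez).2 haI
  have hvφ : star v * φ = 0 := by
    rw [hv, star_sub, star_mul, sqrt_sa, hgsa, sub_mul, mul_assoc, hgφ, sub_self]
  have heφ : CFC.sqrt e * φ = 0 := by
    rw [← CStarRing.star_mul_self_eq_zero_iff, star_mul, sqrt_sa]
    have : star φ * CFC.sqrt e * (CFC.sqrt e * φ) = star φ * (CFC.sqrt e * CFC.sqrt e) * φ := by noncomm_ring
    rw [this, CFC.sqrt_mul_sqrt_self e he0, he, mul_assoc, mul_assoc, hvφ]; simp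
  show kS a (star φ * φ)
  intro ε hε
  obtain ⟨r, hr⟩ := hcb ε hε
  have heR : e ∈ kR a := kR_mul hvR _
  refine kR_conv ha (X := CFC.sqrt e * r) (Y := φ) (kR_mul (kR_trans (kR_sqrt he0) heR) _)
    (by rw [← hgφ]; exact kR_mul hgR _) ?_ (by simpa using hε) ?_
  · have : star (CFC.sqrt e * r) * (CFC.sqrt e * r) = star r * e * r := by
      conv_rhs => rw [← CFC.sqrt_mul_sqrt_self e he0]
      rw [star_mul, sqrt_sa]; noncomm_ring
    rw [this, norm_sub_rev]; exact hr
  · rw [star_mul, sqrt_sa, mul_assoc, heφ]; simpa using hε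

theorem step_T (hpi : PurelyInfinite B) {a : B} (ha : 0 ≤ a) (ha0 : a ≠ 0) {x : B}
    (hx : x ∈ idealGen {a}) (hxx : x * x = 0) : x ∈ kJ a := by
  have hJ := isIdeal_kJ ha
  by_cases hx0 : x = 0
  · rw [hx0]; exact id_zero hJ
  have hK := isIdeal_idealGen ({a} : Set B)
  set m := star x * x + x * star x with hm
  have hm0 : 0 ≤ m := add_nonneg (star_mul_self_nonneg x) (mul_star_self_nonneg x)
  have hmK : m ∈ idealGen {a} := id_add hK (id_mul_left hK _ hx) (id_mul_right hK _ hx)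
  have hmne : m ≠ 0 := by
    intro h0
    have h1 : star x * x ≤ 0 := by
      rw [← h0, hm]; exact le_add_of_nonneg_right (mul_star_self_nonneg x)
    have h2 := le_antisymm h1 (star_mul_self_nonneg x)
    exact hx0 ((CStarRing.star_mul_self_eq_zero_iff x).1 h2)
  have hcb := (hpi.2 m a hm0 hmne ha ha0).2 hmK
  have hxx' : star x * star x = 0 := by rw [← star_mul, hxx, star_zero]
  have hcomm : Commute m x := by
    show m * x = x * m
    have e1 : m * x = star x * (x * x) + x * star x * x := by rw [hm]; noncomm_ring
    have e2 : x * m = x * star x * x + x * x * star x := by rw [hm]; noncomm_ring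
    rw [e1, e2, hxx]; simp
  have hlim : ∀ n : ℕ, ∀ p, p = kW (1 / ((n : ℝ) + 1)) m * kW (1 / ((n : ℝ) + 1)) m * kW (1 / ((n : ℝ) + 1)) m → p * x * p ∈ kJ a := by
    intro n p hp
    obtain ⟨t, ht, htt⟩ := rordam hm0 ha hcb (ε := 1 / ((n : ℝ) + 1)) (by positivity)
    rw [← hp] at htt
    have hW : Commute (kW (1 / ((n : ℝ) + 1)) m) x := kW_comm hcomm hm0
    have hpx : Commute p x := by rw [hp]; exact (hW.mul_left hW).mul_left hW
    have h1 : t * x * star t ∈ kJ a := by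
      refine step_her hpi ha ha0 (by rw [mul_assoc]; exact kR_mul ht _) ?_ ?_
      · rw [star_mul, star_mul, star_star]; exact kR_mul ht _
      · have : t * x * star t * (t * x * star t) = t * (x * (star t * t) * x) * star t := by noncomm_ring
        rw [this, htt, mul_assoc x, hpx.eq, ← mul_assoc x, hxx]; simp
    have h2 := id_mul_right hJ t (id_mul_left hJ (star t) h1)
    have : star t * (t * x * star t) * t = (star t * t) * x * (star t * t) := by noncomm_ring
    rw [this, htt] at h2
    exact h2
  have hW := kW_tendsto hm0
  have hW3 := (hW.mul hW).mul hW
  have h1 : (m * m * m) * x * (m * m * m) ∈ kJ a :=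
    id_lim hJ (fun n => hlim n _ rfl) ((hW3.mul_const x).mul hW3)
  have h2 := id_mul_left hJ (star x) h1
  set c := star x * x with hc
  have hcsa : star c = c := (star_mul_self_nonneg x).isSelfAdjoint.star_eq
  have hxm : star x * m = c * star x := by
    have : star x * m = star x * star x * x + c * star x := by rw [hm, hc]; noncomm_ring
    rw [this, hxx']; simp
  have hcm : c * m = c * c := by
    have : c * m = c * c + star x * (x * x) * star x := by rw [hm, hc]; noncomm_ring
    rw [this, hxx]; simp
  have hxc : star x * (x * star x) = c * star x := by rw [hc]; noncomm_ring
  have hmx : m * x = x * c := by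
    have : m * x = star x * (x * x) + x * c := by rw [hm, hc]; noncomm_ring
    rw [this, hxx]; simp
  have e7 : star x * ((m * m * m) * x * (m * m * m)) = c * c * c * c * c * c * c := by
    have q1 : (m * m * m) * x = x * c * c * c := by
      calc (m * m * m) * x = m * m * (m * x) := by noncomm_ring
        _ = m * m * (x * c) := by rw [hmx]
        _ = m * (m * x) * c := by noncomm_ring
        _ = m * (x * c) * c := by rw [hmx]
        _ = (m * x) * c * c := by noncomm_ring
        _ = _ := by rw [hmx]
    calc star x * ((m * m * m) * x * (m * m * m)) = star x * ((m * m * m * x) * (m * m * m)) := by noncomm_ring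
      _ = c * c * c * (c * m) * m * m := by rw [q1, hc]; noncomm_ring
      _ = c * c * c * (c * c) * m * m := by rw [hcm]
      _ = c * c * c * c * (c * m) * m := by noncomm_ring
      _ = c * c * c * c * (c * c) * m := by rw [hcm]
      _ = c * c * c * c * c * (c * m) := by noncomm_ring
      _ = _ := by rw [hcm]; noncomm_ring
  rw [e7] at h2
  have h3 := id_mul_right hJ c h2
  have sq : ∀ d : B, star d = d → d * d ∈ kJ a → d ∈ kJ a := fun d hd h => id_of_star_mul hJ (by rwa [hd])
  apply id_of_star_mul hJ
  rw [← hc]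
  apply sq c hcsa
  apply sq (c * c) (by rw [star_mul, hcsa])
  apply sq (c * c * (c * c)) (by simp only [star_mul, hcsa])
  convert h3 using 1
  noncomm_ring

theorem PI_of_purely (hpi : PurelyInfinite B) {a : B} (ha : 0 ≤ a) (ha0 : a ≠ 0) : ProperlyInfinite a := by
  apply PI_of_kS ha
  rw [kS_iff_mem ha ha]
  have hJ := isIdeal_kJ ha
  have hK := isIdeal_idealGen ({a} : Set B)
  have haK := self_mem_idealGen a
  have hsaK := id_sqrt hK ha haK
  have hsa := CFC.sqrt_mul_sqrt_self a ha
  have hcom : ∀ (h y : B), 0 ≤ h → y ∈ idealGen {a} → h * y - y * h ∈ kJ a := fun h y hh hy =>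
    comm_mem' hJ hK (fun x hx hxx => step_T hpi ha ha0 hx hxx) hh hy
  have hC : ∀ x : B, a * x - x * a ∈ kJ a := by
    intro x
    have h1 := hcom _ (x * CFC.sqrt a) (CFC.sqrt_nonneg a) (id_mul_left hK _ hsaK)
    have h2 := hcom _ (CFC.sqrt a * x) (CFC.sqrt_nonneg a) (id_mul_right hK _ hsaK)
    have h3 := id_add hJ h1 h2
    have e : CFC.sqrt a * (x * CFC.sqrt a) - x * CFC.sqrt a * CFC.sqrt a +
      (CFC.sqrt a * (CFC.sqrt a * x) - CFC.sqrt a * x * CFC.sqrt a) =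
      (CFC.sqrt a * CFC.sqrt a) * x - x * (CFC.sqrt a * CFC.sqrt a) := by noncomm_ring
    rw [e, hsa] at h3
    exact h3
  set N : Set B := {x | a * (a * (a * x)) ∈ kJ a} with hN
  have hNI : IsIdeal N := by
    refine ⟨fun _ _ => trivial, ?_, ?_, ?_, ?_, ?_⟩
    · exact (id_closed hJ).preimage (by fun_prop)
    · show _ ∈ kJ a
      simpa using id_zero hJ
    · intro x hx y hy
      show _ ∈ kJ a
      have := id_add hJ hx hy
      simpa only [mul_add] using this
    · intro c x hx
      show _ ∈ kJ a
      have := id_smul hJ c hx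
      simpa only [mul_smul_comm] using this
    · intro x hx c _
      have hx : a * (a * (a * x)) ∈ kJ a := hx
      constructor
      · show _ ∈ kJ a
        have e : a * (a * (a * (c * x))) = a * (a * ((a * c - c * a) * x)) + a * ((a * c - c * a) * (a * x))
          + (a * c - c * a) * (a * (a * x)) + c * (a * (a * (a * x))) := by noncomm_ring
        rw [e]
        refine id_add hJ (id_add hJ (id_add hJ ?_ ?_) ?_) (id_mul_left hJ _ hx)
        · exact id_mul_left hJ _ (id_mul_left hJ _ (id_mul_right hJ _ (hC c)))
        · exact id_mul_left hJ _ (id_mul_right hJ _ (hC c))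
        · exact id_mul_right hJ _ (hC c)
      · show _ ∈ kJ a
        have := id_mul_right hJ c hx
        simpa only [mul_assoc] using this
  have hpos : ∀ z : B, 0 ≤ z → ∀ y, z * y - y * z ∈ N := by
    intro z hz y
    show _ ∈ kJ a
    have hz' : 0 ≤ a * z * a := by
      have := star_left_conjugate_nonneg hz a
      rwa [ha.isSelfAdjoint.star_eq] at this
    have h1 := hcom _ (y * a) hz' (id_mul_left hK _ haK)
    have e : a * (a * (a * (z * y - y * z))) =
      (a * z * a * (y * a) - y * a * (a * z * a)) + (a * (a * (a * (z * y) - (z * y) * a)) + a * ((a * z - z * a) * (y * a)))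
       - (a * (a * (a * (y * z) - (y * z) * a)) + a * ((a * y - y * a) * (z * a)) + (a * y - y * a) * (a * z * a)) := by
      noncomm_ring
    rw [e]
    refine id_sub hJ (id_add hJ h1 (id_add hJ ?_ ?_)) (id_add hJ (id_add hJ ?_ ?_) ?_)
    · exact id_mul_left hJ _ (id_mul_left hJ _ (hC _))
    · exact id_mul_left hJ _ (id_mul_right hJ _ (hC _))
    · exact id_mul_left hJ _ (id_mul_left hJ _ (hC _))
    · exact id_mul_left hJ _ (id_mul_right hJ _ (hC _))
    · exact id_mul_right hJ _ (hC _)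
  have hall : ∀ z y : B, z * y - y * z ∈ N := by
    intro z y
    have hz : z ∈ Submodule.span ℂ {a : B | 0 ≤ a} := by rw [CStarAlgebra.span_nonneg]; trivial
    induction hz using Submodule.span_induction with
    | mem z hz => exact hpos z hz y
    | zero => simpa using id_zero hNI
    | add u v _ _ hu hv =>
      have := id_add hNI hu hv
      convert this using 1
      noncomm_ring
    | smul c u _ hu =>
      have := id_smul hNI c hu
      rwa [smul_mul_assoc, mul_smul_comm, ← smul_sub]
  have haN : a ∈ N := by
    by_contra hcon
    exact hpi.1 (exists_character hNI hall ⟨a, hcon⟩)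
  have haN : a * (a * (a * a)) ∈ kJ a := haN
  have sq : ∀ d : B, star d = d → d * d ∈ kJ a → d ∈ kJ a := fun d hd h => id_of_star_mul hJ (by rwa [hd])
  apply sq a ha.isSelfAdjoint.star_eq
  apply sq (a * a) (by rw [star_mul, ha.isSelfAdjoint.star_eq])
  simpa only [mul_assoc] using haN


theorem closSpan_le {J S : Set B} (hJ : IsIdeal J) (f : B →ₗ[ℂ] B) (hf : Continuous f)
    (h : ∀ s ∈ S, f s ∈ J) : ∀ x ∈ closSpan S, f x ∈ J := by
  have h1 : ((Submodule.span ℂ S : Submodule ℂ B) : Set B) ⊆ f ⁻¹' J := by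
    intro x hx
    replace hx : x ∈ Submodule.span ℂ S := hx
    show f x ∈ J
    induction hx using Submodule.span_induction with
    | mem x hx => exact h x hx
    | zero => simpa using id_zero hJ
    | add u v _ _ hu hv => rw [map_add]; exact id_add hJ hu hv
    | smul c u _ hu => rw [map_smul]; exact id_smul hJ c hu
  exact closure_minimal h1 ((id_closed hJ).preimage hf)

theorem closSpan_map {S T : Set B} (f : B →ₗ[ℂ] B) (hf : Continuous f)
    (h : ∀ s ∈ S, f s ∈ T) : ∀ x ∈ closSpan S, f x ∈ closSpan T := by
  have h1 : ((Submodule.span ℂ S : Submodule ℂ B) : Set B) ⊆ f ⁻¹' closSpan T := by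
    intro x hx
    refine subset_closure ?_
    have : Submodule.span ℂ S ≤ (Submodule.span ℂ T).comap f :=
      Submodule.span_le.2 fun s hs => Submodule.subset_span (h s hs)
    exact this hx
  exact closure_minimal h1 (isClosed_closure.preimage hf)

theorem cuntz_zero {a b : B} (h : a = 0) : CuntzBelow a b := by
  intro ε hε
  exact ⟨0, by simpa [h] using hε⟩

theorem cuntz_trans {a b c : B} (h1 : CuntzBelow a b) (h2 : CuntzBelow b c) : CuntzBelow a c := by
  intro ε hε
  obtain ⟨x, hx⟩ := h1 (ε / 2) (by positivity)
  obtain ⟨y, hy⟩ := h2 (ε / (2 * (‖x‖ ^ 2 + 1))) (by positivity)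
  refine ⟨y * x, ?_⟩
  have e : a - star (y * x) * c * (y * x) = (a - star x * b * x) + star x * (b - star y * c * y) * x := by
    rw [star_mul]; noncomm_ring
  rw [e]
  have h3 : ‖star x * (b - star y * c * y) * x‖ ≤ ε / 2 := by
    calc ‖star x * (b - star y * c * y) * x‖ ≤ ‖star x‖ * ‖b - star y * c * y‖ * ‖x‖ := norm_mul₃_le
      _ ≤ ‖x‖ * (ε / (2 * (‖x‖ ^ 2 + 1))) * ‖x‖ := by rw [norm_star]; gcongr
      _ = (ε / 2) * (‖x‖ ^ 2 / (‖x‖ ^ 2 + 1)) := by field_simp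
      _ ≤ (ε / 2) * 1 := by
        gcongr
        rw [div_le_one (by positivity)]; linarith
      _ = ε / 2 := mul_one _
  linarith [norm_add_le (a - star x * b * x) (star x * (b - star y * c * y) * x)]

theorem cuntz_mem {a b : B} (h : CuntzBelow a b) : a ∈ idealGen {b} := by
  have hI := isIdeal_idealGen ({b} : Set B)
  rw [← (id_closed hI).closure_eq, Metric.mem_closure_iff]
  intro ε hε
  obtain ⟨x, hx⟩ := h ε hε
  exact ⟨_, id_mul_right hI _ (id_mul_left hI _ (self_mem_idealGen b)), by rwa [dist_eq_norm]⟩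

theorem isIdeal_zero : IsIdeal ({0} : Set B) := by
  refine ⟨fun _ _ => trivial, isClosed_singleton, rfl, ?_, ?_, ?_⟩
  · rintro x rfl y rfl; simp
  · rintro c x rfl; simp
  · rintro x rfl c _; simp

theorem isIdeal_inter {J K : Set B} (hJ : IsIdeal J) (hK : IsIdeal K) : IsIdeal (J ∩ K) :=
  ⟨fun _ _ => trivial, (id_closed hJ).inter (id_closed hK), ⟨id_zero hJ, id_zero hK⟩,
    fun _ hx _ hy => ⟨id_add hJ hx.1 hy.1, id_add hK hx.2 hy.2⟩,
    fun c _ hx => ⟨id_smul hJ c hx.1, id_smul hK c hx.2⟩,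
    fun _ hx c _ => ⟨⟨id_mul_left hJ c hx.1, id_mul_left hK c hx.2⟩,
      ⟨id_mul_right hJ c hx.1, id_mul_right hK c hx.2⟩⟩⟩

theorem isIdeal_univ : IsIdeal (Set.univ : Set B) :=
  ⟨fun _ _ => trivial, isClosed_univ, trivial, fun _ _ _ _ => trivial, fun _ _ _ => trivial,
    fun _ _ _ _ => ⟨trivial, trivial⟩⟩

/-- ideals not inside `J` meet `A` outside `J` -/
theorem sep_witness {A J K : Set B} (hsep : SeparatesIdeals A) (hJ : IsIdeal J) (hK : IsIdeal K)
    (h : ¬ K ⊆ J) : ∃ a ∈ A, a ∈ K ∧ a ∉ J := by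
  by_contra! hcon
  have := hsep (K ∩ J) K (isIdeal_inter hK hJ) hK (by
    ext x; constructor
    · rintro ⟨⟨h1, _⟩, h3⟩; exact ⟨h1, h3⟩
    · rintro ⟨h1, h3⟩; exact ⟨⟨h1, hcon x h3 h1⟩, h3⟩)
  exact h fun x hx => (this.symm ▸ hx : x ∈ K ∩ J).2

theorem kW_mem {A : Set B} (hA : IsSubCStar A) {a : B} (ha : a ∈ A) (h0 : 0 ≤ a) (ε : ℝ) : kW ε a ∈ A := by
  let S : NonUnitalStarSubalgebra ℂ B :=
    { carrier := A
      add_mem' := fun {x y} hx hy => hA.2.2.1 x hx y hy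
      zero_mem' := hA.2.1
      mul_mem' := fun {x y} hx hy => hA.2.2.2.2.1 x hx y hy
      smul_mem' := fun c {x} hx => hA.2.2.2.1 c x hx
      star_mem' := fun {x} hx => hA.2.2.2.2.2 x hx }
  have hS : IsClosed (S : Set B) := hA.1
  have : cfcₙ (fun t : ℝ => max (t - ε) 0) a ∈ S :=
    cfcₙ_mem (𝕜' := ℂ) (s := S) (hs := hS) (fun t : ℝ => max (t - ε) 0) ha
  exact this

theorem fills_of_purely (A : Set B) (hA : IsSubCStar A) (hsepid : SeparatesIdeals A)
    (hpi : PurelyInfinite B) : Fills {a : B | a ∈ A ∧ 0 ≤ a} := by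
  intro D hD _ J hJ hDJ
  obtain ⟨x, hxD, hxJ⟩ := Set.not_subset.1 hDJ
  obtain ⟨⟨hDc, -, -, hDs, hDm, hDst⟩, hDh⟩ := hD
  set d := star x * x with hd
  have hdD : d ∈ D := hDm _ (hDst _ hxD) _ hxD
  have hdJ : d ∉ J := fun h => hxJ (id_of_star_mul hJ h)
  have hd0 : 0 ≤ d := star_mul_self_nonneg x
  have hdne : d ≠ 0 := fun h => hdJ (h ▸ id_zero hJ)
  have hK := isIdeal_idealGen ({d} : Set B)
  obtain ⟨a0, h1, h2, h3⟩ := sep_witness hsepid hJ hK fun h => hdJ (h (self_mem_idealGen d))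
  set a := star a0 * a0 with ha
  have haA : a ∈ A := hA.2.2.2.2.1 _ (hA.2.2.2.2.2 _ h1) _ h1
  have haK : a ∈ idealGen {d} := id_mul_left hK _ h2
  have haJ : a ∉ J := fun h => h3 (id_of_star_mul hJ h)
  have ha0 : 0 ≤ a := star_mul_self_nonneg a0
  have hane : a ≠ 0 := fun h => haJ (h ▸ id_zero hJ)
  have hcb := (hpi.2 a d ha0 hane hd0 hdne).2 haK
  have : ∃ n : ℕ, kW (1 / ((n : ℝ) + 1)) a * kW (1 / ((n : ℝ) + 1)) a * kW (1 / ((n : ℝ) + 1)) a ∉ J := by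
    by_contra! hcon
    have hW := kW_tendsto ha0
    exact haJ (id_cube hJ ha0.isSelfAdjoint.star_eq (id_lim hJ hcon ((hW.mul hW).mul hW)))
  obtain ⟨n, hn⟩ := this
  obtain ⟨z, hz, hzz⟩ := rordam ha0 hd0 hcb (ε := 1 / ((n : ℝ) + 1)) (by positivity)
  refine ⟨z, fun h => hn ?_, ?_, ?_, star_mul_self_nonneg z⟩
  · rw [← hzz]; exact id_mul_left hJ _ h
  · obtain ⟨c, hc⟩ := kR_seq hz
    refine hDc.mem_of_tendsto (hc.mul hc.star) (Eventually.of_forall fun k => ?_)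
    have h5 := CStarAlgebra.star_right_conjugate_le_norm_smul (a := d) (b := c k * star (c k)) (IsSelfAdjoint.mul_star_self _)
    rw [hd0.isSelfAdjoint.star_eq] at h5
    refine hDh _ (‖c k * star (c k)‖ • (d * d)) ?_ (mul_star_self_nonneg _) ?_
    · have := hDs (‖c k * star (c k)‖ : ℂ) _ (hDm _ hdD _ hdD)
      rwa [Complex.coe_smul] at this
    · rw [star_mul, hd0.isSelfAdjoint.star_eq]
      convert h5 using 1
      noncomm_ring
  · rw [hzz]
    have := kW_mem hA haA ha0 (1 / ((n : ℝ) + 1))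
    exact hA.2.2.2.2.1 _ (hA.2.2.2.2.1 _ this _ this) _ this

theorem E_cont (E : B →ₗ[ℂ] B) (hEnorm : ∀ b : B, ‖E b‖ ≤ ‖b‖) : Continuous E :=
  AddMonoidHomClass.continuous_of_bound E 1 (by simpa using hEnorm)

theorem E_below (A : Set B) (hA : IsSubCStar A) (hsym : SymmetricInclusion A)
    (E : B →ₗ[ℂ] B)
    (hEnorm : ∀ b : B, ‖E b‖ ≤ ‖b‖)
    (hEpos : ∀ b : B, 0 ≤ b → 0 ≤ E b)
    (hEbimod : ∀ a ∈ A, ∀ c ∈ A, ∀ b : B, E (a * b * c) = a * E b * c)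
    (hsepid : SeparatesIdeals A) (hpi : PurelyInfinite B) (b : B) (hb : 0 ≤ b) :
    CuntzBelow (E b) b := by
  have hEc := E_cont E hEnorm
  by_cases hE0 : E b = 0
  · exact cuntz_zero hE0
  have hb0 : b ≠ 0 := fun h => hE0 (by rw [h, map_zero])
  rw [hpi.2 (E b) b (hEpos b hb) hE0 hb hb0]
  have hJ := isIdeal_idealGen ({b} : Set B)
  set J := idealGen ({b} : Set B) with hJd
  set I := J ∩ A with hI
  have hLR := hsym I ⟨J, hJ, rfl⟩
  set L := closSpan {z : B | ∃ x ∈ I, ∃ b : B, z = x * b} with hL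
  have hLI : IsIdeal L := by
    refine ⟨fun _ _ => trivial, isClosed_closure, subset_closure (Submodule.zero_mem _), ?_, ?_, ?_⟩
    · intro x hx y hy
      exact (Submodule.span ℂ {z : B | ∃ x ∈ I, ∃ b : B, z = x * b}).topologicalClosure.add_mem hx hy
    · intro c x hx
      exact (Submodule.span ℂ {z : B | ∃ x ∈ I, ∃ b : B, z = x * b}).topologicalClosure.smul_mem c hx
    · intro x hx c _
      constructor
      · rw [hLR] at hx ⊢
        refine closSpan_map (LinearMap.mulLeft ℂ c) (continuous_const_mul c) ?_ x hx
        rintro _ ⟨d, y, hy, rfl⟩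
        exact ⟨c * d, y, hy, by simp [mul_assoc]⟩
      · refine closSpan_map (LinearMap.mulRight ℂ c) (continuous_mul_const c) ?_ x hx
        rintro _ ⟨y, hy, d, rfl⟩
        exact ⟨y, hy, d * c, by simp [mul_assoc]⟩
  have hIL : I ⊆ L := by
    intro x hx
    have h0 := star_mul_self_nonneg x
    have := (K1_tendsto (s := star x) h0 (by rw [star_star])).star
    rw [star_star] at this
    refine id_lim hLI (fun n => ?_) this
    rw [star_mul, star_star]
    exact subset_closure (Submodule.subset_span ⟨x, hx, _, rfl⟩)
  have hJgen : idealGen I = J := by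
    refine hsepid _ _ (isIdeal_idealGen I) hJ ?_
    ext x; constructor
    · rintro ⟨h1, h2⟩
      exact ⟨idealGen_min hJ (fun y hy => hy.1) h1, h2⟩
    · rintro h
      exact ⟨subset_idealGen I h, h.2⟩
  have hJL : J ⊆ L := by rw [← hJgen]; exact idealGen_min hLI hIL
  have key : ∀ u ∈ L, ∀ v ∈ L, E (u * v) ∈ J := by
    have k1 : ∀ x ∈ I, ∀ c : B, ∀ v ∈ L, E (x * c * v) ∈ J := by
      intro x hx c v hv
      rw [hLR] at hv
      refine closSpan_le hJ (E ∘ₗ LinearMap.mulLeft ℂ (x * c)) ?_ ?_ v hv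
      · exact hEc.comp (continuous_const_mul (x * c))
      · rintro _ ⟨d, y, hy, rfl⟩
        have : (E ∘ₗ LinearMap.mulLeft ℂ (x * c)) (d * y) = x * E (c * d) * y := by
          rw [← hEbimod x hx.2 y hy.2]
          simp [mul_assoc]
        rw [this]
        exact id_mul_left hJ _ hy.1
    intro u hu v hv
    refine closSpan_le hJ (E ∘ₗ LinearMap.mulRight ℂ v) ?_ ?_ u hu
    · exact hEc.comp (continuous_mul_const v)
    · rintro _ ⟨x, hx, c, rfl⟩
      exact k1 x hx c v hv
  have hsb : CFC.sqrt b ∈ L := hJL (id_sqrt hJ hb (self_mem_idealGen b))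
  have := key _ hsb _ hsb
  rwa [CFC.sqrt_mul_sqrt_self b hb] at this

theorem no_char (A : Set B) (hA : IsSubCStar A) (hsepid : SeparatesIdeals A)
    (hPI : ∀ a ∈ A, 0 ≤ a → a ≠ 0 → ProperlyInfinite a) : ¬ ∃ φ : B →ₗ[ℂ] ℂ, IsCharacter φ := by
  rintro ⟨φ, hφ⟩
  have hc : Continuous φ := AddMonoidHomClass.continuous_of_bound φ 1 (by simpa using character_bound hφ)
  have hker : IsIdeal {x : B | φ x = 0} := by
    refine ⟨fun _ _ => trivial, isClosed_eq hc continuous_const, map_zero φ, ?_, ?_, ?_⟩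
    · intro x hx y hy
      show φ _ = 0
      rw [map_add, show φ x = 0 from hx, show φ y = 0 from hy, add_zero]
    · intro c x hx
      show φ _ = 0
      rw [map_smul, show φ x = 0 from hx, smul_zero]
    · intro x hx c _
      have hx : φ x = 0 := hx
      constructor
      · show φ _ = 0
        rw [hφ.1, hx, mul_zero]
      · show φ _ = 0
        rw [hφ.1, hx, zero_mul]
  obtain ⟨a0, h1, -, h3⟩ := sep_witness hsepid hker isIdeal_univ (by
    intro h
    exact hφ.2 (LinearMap.ext fun x => h trivial))
  have ha : φ (star a0 * a0) ≠ 0 := fun h => h3 (id_of_star_mul hker h)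
  set a := star a0 * a0 with had
  have hane : a ≠ 0 := fun h => ha (by rw [h, map_zero])
  have hpos : 0 < ‖φ a‖ := norm_pos_iff.2 ha
  obtain ⟨x, y, -, -, i1, i2, i3⟩ := hPI a (hA.2.2.2.2.1 _ (hA.2.2.2.2.2 _ h1) _ h1) (star_mul_self_nonneg a0) hane
    (‖φ a‖ / 4) (by positivity)
  have i4 : ‖star y * x‖ ≤ ‖φ a‖ / 4 := by rw [← norm_star]; simpa using i3
  have j1 := (character_bound hφ _).trans i1
  have j2 := (character_bound hφ _).trans i2
  have j3 := (character_bound hφ _).trans i3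
  have j4 := (character_bound hφ _).trans i4
  rw [map_sub] at j1 j2
  have k1 : 3 / 4 * ‖φ a‖ ≤ ‖φ (star x * x)‖ := by
    have := norm_sub_norm_le (φ a) (φ (star x * x))
    rw [norm_sub_rev] at this; linarith
  have k2 : 3 / 4 * ‖φ a‖ ≤ ‖φ (star y * y)‖ := by
    have := norm_sub_norm_le (φ a) (φ (star y * y))
    rw [norm_sub_rev] at this; linarith
  have e : ‖φ (star x * x)‖ * ‖φ (star y * y)‖ = ‖φ (star x * y)‖ * ‖φ (star y * x)‖ := by
    simp only [hφ.1, norm_mul]; ring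
  have l1 : (3 / 4 * ‖φ a‖) * (3 / 4 * ‖φ a‖) ≤ ‖φ (star x * x)‖ * ‖φ (star y * y)‖ := by gcongr
  have l2 : ‖φ (star x * y)‖ * ‖φ (star y * x)‖ ≤ (‖φ a‖ / 4) * (‖φ a‖ / 4) := by gcongr
  nlinarith

theorem compar (A : Set B) (hA : IsSubCStar A)
    (E : B →ₗ[ℂ] B)
    (hEmem : ∀ b : B, E b ∈ A)
    (hEnorm : ∀ b : B, ‖E b‖ ≤ ‖b‖)
    (hEid : ∀ a ∈ A, E a = a)
    (hEpos : ∀ b : B, 0 ≤ b → 0 ≤ E b)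
    (hEressym : ∀ I : Set B, IsRestricted A I → ∀ b : B,
      E (star b * b) ∈ I → E (b * star b) ∈ I)
    (hsepid : SeparatesIdeals A)
    (hPI : ∀ a ∈ A, 0 ≤ a → a ≠ 0 → ProperlyInfinite a)
    (hEb : ∀ b : B, 0 ≤ b → CuntzBelow (E b) b)
    {a b : B} (ha : 0 ≤ a) (hb : 0 ≤ b) (hb0 : b ≠ 0) (hab : a ∈ idealGen {b}) : CuntzBelow a b := by
  have hEc := E_cont E hEnorm
  have hJ := isIdeal_idealGen ({E b} : Set B)
  set J := idealGen ({E b} : Set B) with hJd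
  have hmono : ∀ u v : B, u ≤ v → E u ≤ E v := by
    intro u v h
    have := hEpos _ (sub_nonneg.2 h)
    rwa [map_sub, sub_nonneg] at this
  have hrs : ∀ x : B, E (star x * x) ∈ J → E (x * star x) ∈ J := fun x hx =>
    (hEressym (J ∩ A) ⟨J, hJ, rfl⟩ x ⟨hx, hEmem _⟩).1
  have hErs : ∀ (c : ℝ) (x : B), E (c • x) = c • E x := by
    intro c x
    rw [← Complex.coe_smul, map_smul, Complex.coe_smul]
  have hleft : ∀ c x : B, E (star x * x) ∈ J → E (star (c * x) * (c * x)) ∈ J := by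
    intro c x hx
    have h1 := CStarAlgebra.star_left_conjugate_le_norm_smul (a := x) (b := star c * c) (IsSelfAdjoint.star_mul_self c)
    have h2 : star (c * x) * (c * x) = star x * (star c * c) * x := by rw [star_mul]; noncomm_ring
    refine id_her' hJ (hEpos _ (star_mul_self_nonneg _)) (hmono _ _ (h2 ▸ h1)) ?_
    rw [hErs]; exact id_rsmul hJ _ hx
  have hN : IsIdeal {x : B | E (star x * x) ∈ J} := by
    refine ⟨fun _ _ => trivial, ?_, ?_, ?_, ?_, ?_⟩
    · exact (id_closed hJ).preimage (by fun_prop)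
    · show E _ ∈ J
      simpa using id_zero hJ
    · intro x hx y hy
      have hx : E (star x * x) ∈ J := hx
      have hy : E (star y * y) ∈ J := hy
      show E _ ∈ J
      have h1 : star (x + y) * (x + y) ≤ star x * x + star y * y + (star x * x + star y * y) := by
        rw [← sub_nonneg]
        have e : (star x * x + star y * y + (star x * x + star y * y)) - star (x + y) * (x + y) = star (x - y) * (x - y) := by
          simp only [star_add, star_sub]; noncomm_ring
        rw [e]; exact star_mul_self_nonneg _
      refine id_her' hJ (hEpos _ (star_mul_self_nonneg _)) (hmono _ _ h1) ?_
      simp only [map_add]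
      exact id_add hJ (id_add hJ hx hy) (id_add hJ hx hy)
    · intro c x hx
      show E _ ∈ J
      rw [star_smul, smul_mul_assoc, mul_smul_comm, map_smul, map_smul]
      exact id_smul hJ _ (id_smul hJ _ hx)
    · intro x hx c _
      have hx : E (star x * x) ∈ J := hx
      refine ⟨hleft c x hx, ?_⟩
      show E _ ∈ J
      have h1 := hrs x hx
      have h2 := hleft (star c) (star x) (by rwa [star_star])
      have h3 := hrs _ h2
      simpa only [star_mul, star_star] using h3
  have hNJ : {x : B | E (star x * x) ∈ J} = J := by
    refine hsepid _ _ hN hJ ?_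
    ext x
    constructor
    · rintro ⟨h1, h2⟩
      have h1 : E (star x * x) ∈ J := h1
      rw [hEid _ (hA.2.2.2.2.1 _ (hA.2.2.2.2.2 _ h2) _ h2)] at h1
      exact ⟨id_of_star_mul hJ h1, h2⟩
    · rintro ⟨h1, h2⟩
      refine ⟨?_, h2⟩
      show E (star x * x) ∈ J
      rw [hEid _ (hA.2.2.2.2.1 _ (hA.2.2.2.2.2 _ h2) _ h2)]
      exact id_mul_left hJ _ h1
  have hsb : CFC.sqrt b ∈ J := by
    rw [← hNJ]
    show E _ ∈ J
    rw [sqrt_sa, CFC.sqrt_mul_sqrt_self b hb]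
    exact self_mem_idealGen _
  have hbJ : b ∈ J := by
    rw [← CFC.sqrt_mul_sqrt_self b hb]; exact id_mul_left hJ _ hsb
  have hEb0 : E b ≠ 0 := by
    intro h0
    have : b ∈ ({0} : Set B) := idealGen_min isIdeal_zero (by rw [h0]) hbJ
    exact hb0 this
  have hEp := hEpos b hb
  have hSS := kS_of_PI hEp (hPI _ (hEmem b) hEp hEb0)
  have hmem := (kS_iff_mem hEp hEp).1 hSS
  have haJ : a ∈ J := idealGen_min hJ (by rintro _ rfl; exact hbJ) hab
  have haK : a ∈ kJ (E b) := idealGen_min (isIdeal_kJ hEp) (by rintro _ rfl; exact hmem) haJ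
  have hSa := (kS_iff_mem hEp ha).2 haK
  refine cuntz_trans ?_ (hEb b hb)
  intro ε hε
  obtain ⟨r, s, -, h2, -⟩ := hSa ε hε
  exact ⟨s, by rwa [norm_sub_rev]⟩

end helpers


/-- For a symmetric C*-inclusion with a residually symmetric conditional expectation `E`,
if `A` separates ideals in `B`, then `B` is purely infinite iff every nonzero `a ∈ A⁺` is
properly infinite in `B` and `E b ≼ b` for every `b ∈ B⁺`; moreover, if `B` is purely
infinite then `A⁺` fills `B`. -/
theorem stmt3 (A : Set B) (hA : IsSubCStar A) (hsym : SymmetricInclusion A)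
    (E : B →ₗ[ℂ] B)
    (hEmem : ∀ b : B, E b ∈ A)
    (hEnorm : ∀ b : B, ‖E b‖ ≤ ‖b‖)
    (hEid : ∀ a ∈ A, E a = a)
    (hEpos : ∀ b : B, 0 ≤ b → 0 ≤ E b)
    (hEbimod : ∀ a ∈ A, ∀ c ∈ A, ∀ b : B, E (a * b * c) = a * E b * c)
    (hEressym : ∀ I : Set B, IsRestricted A I → ∀ b : B,
      E (star b * b) ∈ I → E (b * star b) ∈ I)
    (hsepid : SeparatesIdeals A) :
    (PurelyInfinite B ↔
      ((∀ a ∈ A, 0 ≤ a → a ≠ 0 → ProperlyInfinite a) ∧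
        ∀ b : B, 0 ≤ b → CuntzBelow (E b) b)) ∧
    (PurelyInfinite B → Fills {a : B | a ∈ A ∧ 0 ≤ a}) := by
  refine ⟨⟨fun hpi => ⟨fun a _ ha ha0 => PI_of_purely hpi ha ha0,
      fun b hb => E_below A hA hsym E hEnorm hEpos hEbimod hsepid hpi b hb⟩,
    fun ⟨hPI, hEb⟩ => ⟨no_char A hA hsepid hPI, fun a b ha _ hb hb0 =>
      ⟨cuntz_mem, compar A hA E hEmem hEnorm hEid hEpos hEressym hsepid hPI hEb ha hb hb0⟩⟩⟩,
    fills_of_purely A hA hsepid⟩
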